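/- arXiv:1507.06691 — 4 statements merged into one kernel-verified Lean document; each statement's English description precedes it below -/
import Mathlib

section
/- Let U be a Banach space, V a Hilbert space, b : U × V → ℝ a bounded bilinear form satisfying injectivity and inf-sup conditions, and Θ : U → V the trial-to-test operator defined by ⟨Θu, v⟩_V = b(u,v) for all v ∈ V. If U_h ⊂ U is a finite-dimensional subspace and u ∈ U satisfies b(u,v)=ℓ(v) for all v∈V, then there is a unique u_h ∈ U_h with b(u_h, Θw_h) = ℓ(Θw_h) for all w_h ∈ U_h, and ‖u − u_h‖_E = inf_{w_h ∈ U_h} ‖u − w_h‖_E. -/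
open scoped RealInnerProductSpace

/-! The identity `b u v = ⟪Θ u, v⟫` makes `Θ` linear and, by Cauchy–Schwarz, turns the energy norm
of `u` into `‖Θ u‖`. The discrete problem reads `⟪Θ uh, Θ wh⟫ = ℓ (Θ wh)`, so it asks for the
Riesz representative of a functional on the finite-dimensional space `Θ Uh`. For consistent data,
`Θ uh` is the orthogonal projection of `Θ u` onto `Θ Uh`, whence the best approximation property. -/

theorem norm_le_norm_add_of_inner_eq_zero {𝕜 V : Type*} [RCLike 𝕜]
    [SeminormedAddCommGroup V] [InnerProductSpace 𝕜 V] {x y : V} (h : inner 𝕜 x y = 0) :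
    ‖x‖ ≤ ‖x + y‖ := by
  have pythagoras := norm_add_sq_eq_norm_sq_add_norm_sq_of_inner_eq_zero x y h
  nlinarith [mul_self_nonneg ‖y‖, norm_nonneg x, norm_nonneg (x + y)]

section RCLike

variable {𝕜 V : Type*} [RCLike 𝕜] [NormedAddCommGroup V] [InnerProductSpace 𝕜 V]

theorem existsUnique_forall_inner_eq [FiniteDimensional 𝕜 V] (f : V →ₗ[𝕜] 𝕜) :
    ∃! y : V, ∀ v : V, inner 𝕜 y v = f v := by
  have : CompleteSpace V := FiniteDimensional.complete 𝕜 V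
  simpa only [ContinuousLinearMap.ext_iff, InnerProductSpace.toDual_apply_apply,
    LinearMap.coe_toContinuousLinearMap'] using
    (InnerProductSpace.toDual 𝕜 V).bijective.existsUnique (LinearMap.toContinuousLinearMap f)

theorem existsUnique_forall_inner_map_eq {W : Type*} [AddCommGroup W] [Module 𝕜 W]
    [FiniteDimensional 𝕜 W] {T : W →ₗ[𝕜] V} (hT : Function.Injective T) (f : W →ₗ[𝕜] 𝕜) :
    ∃! y : W, ∀ w : W, inner 𝕜 (T y) (T w) = f w := by
  let e : W ≃ₗ[𝕜] T.range := LinearEquiv.ofInjective T hT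
  have riesz : ∃! z : T.range, ∀ z' : T.range, inner 𝕜 z z' = f (e.symm z') :=
    existsUnique_forall_inner_eq (f ∘ₗ e.symm.toLinearMap)
  rw [e.bijective.existsUnique_iff] at riesz
  simpa only [e.surjective.forall, e.symm_apply_apply, Submodule.coe_inner, e,
    LinearEquiv.ofInjective_apply] using riesz

end RCLike

section Real

variable {U V : Type*} [AddCommGroup U] [Module ℝ U] [NormedAddCommGroup V] [InnerProductSpace ℝ V]

theorem isLinearMap_of_forall_inner_eq {b : U →ₗ[ℝ] V →ₗ[ℝ] ℝ} {Θ : U → V}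
    (hΘ : ∀ u v, ⟪Θ u, v⟫ = b u v) : IsLinearMap ℝ Θ where
  map_add x y := ext_inner_right ℝ fun v ↦ by
    simp only [inner_add_left, hΘ, map_add, LinearMap.add_apply]
  map_smul c x := ext_inner_right ℝ fun v ↦ by
    simp only [real_inner_smul_left, hΘ, map_smul, LinearMap.smul_apply, smul_eq_mul]

theorem sSup_inner_div_norm (x : V) :
    sSup {r : ℝ | ∃ v : V, v ≠ 0 ∧ r = ⟪x, v⟫ / ‖v‖} = ‖x‖ := by
  have upper : ∀ r ∈ {r : ℝ | ∃ v : V, v ≠ 0 ∧ r = ⟪x, v⟫ / ‖v‖}, r ≤ ‖x‖ := by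
    rintro _ ⟨v, hv, rfl⟩
    exact (div_le_iff₀ (norm_pos_iff.mpr hv)).mpr (real_inner_le_norm x v)
  refine le_antisymm (Real.sSup_le upper (norm_nonneg x)) ?_
  obtain rfl | hx := eq_or_ne x 0
  · -- If `V` is trivial, the supremum is the junk value `sSup ∅ = 0`, so `0` need not be attained.
    rw [norm_zero]
    refine Real.sSup_nonneg ?_
    rintro _ ⟨v, -, rfl⟩
    rw [inner_zero_left, zero_div]
  · refine le_csSup ⟨‖x‖, upper⟩ ⟨x, hx, ?_⟩
    rw [real_inner_self_eq_norm_mul_norm, mul_div_cancel_right₀ _ (norm_ne_zero_iff.mpr hx)]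

theorem dpg_discrete_wellposedness_best_approximation_general
    (b : U →ₗ[ℝ] V →ₗ[ℝ] ℝ)
    (E : U → ℝ)
    (hE : ∀ u : U, E u = sSup {r : ℝ | ∃ v : V, v ≠ 0 ∧ r = b u v / ‖v‖})
    (Θ : U → V) (hΘ : ∀ (u : U) (v : V), ⟪Θ u, v⟫ = b u v)
    (Uh : Submodule ℝ U) [FiniteDimensional ℝ Uh]
    (hinj : ∀ wh ∈ Uh, (∀ v : V, b wh v = 0) → wh = 0)
    (ℓ : V →ₗ[ℝ] ℝ) :
    ∃ uh ∈ Uh, (∀ wh ∈ Uh, b uh (Θ wh) = ℓ (Θ wh)) ∧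
      (∀ uh' ∈ Uh, (∀ wh ∈ Uh, b uh' (Θ wh) = ℓ (Θ wh)) → uh' = uh) ∧
      ∀ u : U, (∀ wh ∈ Uh, b u (Θ wh) = ℓ (Θ wh)) →
        IsLeast {r : ℝ | ∃ wh ∈ Uh, r = E (u - wh)} (E (u - uh)) := by
  obtain ⟨T, rfl⟩ : ∃ T : U →ₗ[ℝ] V, ⇑T = Θ := ⟨(isLinearMap_of_forall_inner_eq hΘ).mk' Θ, rfl⟩
  have energy_eq (x : U) : E x = ‖T x‖ := by simp only [hE, ← hΘ, sSup_inner_div_norm]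
  have injective : Function.Injective (T.domRestrict Uh) := by
    refine (injective_iff_map_eq_zero _).mpr fun w hw ↦ Subtype.ext (hinj w w.2 fun v ↦ ?_)
    rw [← hΘ, show T w = 0 from hw, inner_zero_left]
  obtain ⟨⟨uh, huh⟩, solves, unique⟩ :=
    existsUnique_forall_inner_map_eq injective (ℓ ∘ₗ T.domRestrict Uh)
  simp only [Subtype.forall, LinearMap.domRestrict_apply, LinearMap.comp_apply, hΘ,
    Subtype.mk.injEq] at solves unique
  refine ⟨uh, huh, solves, unique, fun u hu ↦ ⟨⟨uh, huh, rfl⟩, ?_⟩⟩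
  rintro _ ⟨wh, hwh, rfl⟩
  have orthogonal : ⟪T (u - uh), T (uh - wh)⟫ = 0 := by
    have hmem : uh - wh ∈ Uh := Uh.sub_mem huh hwh
    rw [hΘ, map_sub, LinearMap.sub_apply, hu _ hmem, solves _ hmem, sub_self]
  simpa only [energy_eq, ← map_add, sub_add_sub_cancel] using
    norm_le_norm_add_of_inner_eq_zero orthogonal

end Real

/-- discrete DPG problem with optimal test functions: unique solvability
in a finite-dimensional subspace and best approximation in the energy norm. -/
theorem dpg_discrete_wellposedness_best_approximation
    (U V : Type*) [NormedAddCommGroup U] [NormedSpace ℝ U] [CompleteSpace U]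
    [NormedAddCommGroup V] [InnerProductSpace ℝ V] [CompleteSpace V]
    (b : U →L[ℝ] V →L[ℝ] ℝ)
    (hinj : ∀ u : U, (∀ v : V, b u v = 0) → u = 0)
    (γ : ℝ) (hγ : 0 < γ)
    (hinfsup : ∀ v : V, γ * ‖v‖ ≤ sSup {r : ℝ | ∃ u : U, u ≠ 0 ∧ r = b u v / ‖u‖})
    (E : U → ℝ)
    (hE : ∀ u : U, E u = sSup {r : ℝ | ∃ v : V, v ≠ 0 ∧ r = b u v / ‖v‖})
    (Θ : U → V) (hΘ : ∀ (u : U) (v : V), ⟪Θ u, v⟫ = b u v)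
    (Uh : Submodule ℝ U) [FiniteDimensional ℝ Uh]
    (ℓ : V →L[ℝ] ℝ) (u : U) (hu : ∀ v : V, b u v = ℓ v) :
    ∃ uh : U, uh ∈ Uh ∧ (∀ wh ∈ Uh, b uh (Θ wh) = ℓ (Θ wh)) ∧
      (∀ uh' : U, uh' ∈ Uh → (∀ wh ∈ Uh, b uh' (Θ wh) = ℓ (Θ wh)) → uh' = uh) ∧
      E (u - uh) = sInf {r : ℝ | ∃ wh ∈ Uh, r = E (u - wh)} := by
  obtain ⟨uh, huh, solves, unique, best⟩ := dpg_discrete_wellposedness_best_approximation_general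
    b.toLinearMap₁₂ E hE Θ hΘ Uh (fun w _ ↦ hinj w) ℓ.toLinearMap
  exact ⟨uh, huh, solves, unique, (best u fun wh _ ↦ hu (Θ wh)).csInf_eq.symm⟩
end

section
/- For 0 < β < 1 and every φ ∈ C_c^∞((0,1)), the Riemann–Liouville fractional integral satisfies the coercivity estimate ∫_0^1 (D^{-β}φ)(x) φ(x) dx ≥ cos(πβ/2) ∫_ℝ |ξ|^{-β} |F(φ)(ξ)|² dξ, where φ is extended by zero to ℝ and F denotes the Fourier transform. In particular, ∫_0^1 (D^{-β}φ)φ dx ≥ 0. -/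
open MeasureTheory Set

/-- Fourier transform `F u (ξ) = (2π)^{-1/2} ∫_ℝ u(x) e^{-i x ξ} dx` of a real function. -/
noncomputable def FT (u : ℝ → ℝ) (ξ : ℝ) : ℂ :=
  ((2 * Real.pi) ^ (-(1 : ℝ) / 2) : ℝ) *
    ∫ x : ℝ, (u x : ℂ) * Complex.exp (-Complex.I * x * ξ)

/-- Left-sided Riemann–Liouville fractional integral of order `β` on `(0,1)`. -/
noncomputable def RLleft (β : ℝ) (u : ℝ → ℝ) (x : ℝ) : ℝ :=
  (Real.Gamma β)⁻¹ * ∫ s in Ioo (0 : ℝ) x, (x - s) ^ (β - 1) * u s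

/-!
Let `A` be the autocorrelation of `φ`, an even function with Fourier transform `|φ̂|² ≥ 0`. Then
`Γ(β) ∫ (D^{-β}φ) φ` is the Mellin transform of `A` at `β`, that is, half of `∫ |t|^(β-1) A(t) dt`.

Such power-weighted integrals are moved to the Fourier side by pairing a function `f` with the
Gaussians `exp(-π r |x|²)`: the Mellin transform in `r` of this pairing, at `s / 2`, is
`Γℝ(s) ∫ |x|^(-s) f(x) dx`, and self-duality of Gaussians exchanges `f` with its Fourier transform
while sending `r` to `r⁻¹`. In dimension `d` this gives
`Γℝ(s) ∫ |ξ|^(-s) f̂(ξ) dξ = Γℝ(d - s) ∫ |x|^(s - d) f(x) dx`; the left side converges because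
`f̂ ≥ 0`. For `d = 1` and `f = A`, the reflection formula for `Γℝ(s) / Γℝ(1 - s)` produces the
factor `cos(πβ/2)`, so the coercivity estimate is an equality.
-/

section GaussianPairing

open Real FourierTransform Module
open Complex (Gammaℝ)

theorem hasMellin_gaussian {s : ℂ} (hs : 0 < s.re) {c : ℝ} (hc : 0 < c) :
    HasMellin (fun r : ℝ ↦ Complex.exp (-(π * r) * c ^ 2)) (s / 2)
      (Gammaℝ s * (c : ℂ) ^ (-s)) := by
  have hs2 : 0 < (s / 2).re := by simpa using hs
  have ha : 0 < π * c ^ 2 := by positivity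
  have hscale : (fun r : ℝ ↦ Complex.exp (-(π * r) * c ^ 2)) =
      fun r ↦ ((exp (-(π * c ^ 2 * r)) : ℝ) : ℂ) := by
    ext r; push_cast; ring_nf
  have hpow : ((π * c ^ 2 : ℝ) : ℂ) ^ (-(s / 2)) = (π : ℂ) ^ (-s / 2) * (c : ℂ) ^ (-s) := by
    rw [Complex.ofReal_mul, Complex.mul_cpow_ofReal_nonneg pi_pos.le (sq_nonneg c),
      ← rpow_two, ← Complex.cpow_mul_ofReal_nonneg hc.le]
    push_cast
    ring_nf
  rw [hscale]
  refine ⟨(MellinConvergent.comp_mul_left (f := fun r ↦ ((exp (-r) : ℝ) : ℂ)) ha).2 ?_, ?_⟩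
  · simpa only [MellinConvergent, smul_eq_mul, mul_comm] using Complex.GammaIntegral_convergent hs2
  · rw [mellin_comp_mul_left (fun r ↦ ((exp (-r) : ℝ) : ℂ)) _ ha, ← Complex.GammaIntegral_eq_mellin,
      ← Complex.Gamma_eq_integral hs2, hpow, Complex.Gammaℝ_def, smul_eq_mul]
    ring

theorem integral_cpow_mul_gaussian {s : ℂ} (hs : 0 < s.re) {c : ℝ} (hc : 0 < c) :
    ∫ r in Ioi (0 : ℝ), (r : ℂ) ^ (s / 2 - 1) * Complex.exp (-(π * r) * c ^ 2) =
      Gammaℝ s * (c : ℂ) ^ (-s) :=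
  (hasMellin_gaussian hs hc).2

theorem gaussian_eq_ofReal (r c : ℝ) :
    Complex.exp (-(π * r) * (c : ℂ) ^ 2) = (exp (-(π * r) * c ^ 2) : ℝ) := by
  push_cast; rfl

theorem integral_norm_cpow_mul_gaussian {s : ℂ} (hs : 0 < s.re) {c : ℝ} (hc : 0 < c) :
    ∫ r in Ioi (0 : ℝ), ‖(r : ℂ) ^ (s / 2 - 1) * Complex.exp (-(π * r) * c ^ 2)‖ =
      ‖Gammaℝ s.re‖ * ‖(c : ℂ) ^ (-s)‖ := by
  have hnorm : ∫ r in Ioi (0 : ℝ), (r : ℂ) ^ ((s.re : ℂ) / 2 - 1) *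
        Complex.exp (-(π * r) * c ^ 2) =
      (∫ r in Ioi (0 : ℝ), ‖(r : ℂ) ^ (s / 2 - 1) * Complex.exp (-(π * r) * c ^ 2)‖ : ℝ) := by
    rw [← integral_complex_ofReal]
    refine setIntegral_congr_fun measurableSet_Ioi fun r (hr : 0 < r) ↦ ?_
    simp only [norm_mul, Complex.norm_cpow_eq_rpow_re_of_pos hr, gaussian_eq_ofReal,
      Complex.norm_of_nonneg (exp_nonneg _)]
    simp [Complex.ofReal_cpow hr.le]
  rw [← Complex.norm_of_nonneg (integral_nonneg fun _ ↦ norm_nonneg _), ← hnorm,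
    integral_cpow_mul_gaussian (by simpa using hs) hc, norm_mul,
    Complex.norm_cpow_eq_rpow_re_of_pos hc, Complex.norm_cpow_eq_rpow_re_of_pos hc]
  simp

variable {E : Type*} [NormedAddCommGroup E] [NormedSpace ℂ E]

theorem hasMellin_of_eq_cpow_smul_inv {g h : ℝ → E} {a s : ℂ} {m : E}
    (hgh : ∀ r : ℝ, 0 < r → g r = (r : ℂ) ^ (-a) • h r⁻¹) (hg : HasMellin g (a - s) m) :
    HasMellin h s m := by
  have hpow : a - s + -a = -s := by ring
  constructor
  · have hconv : MellinConvergent (fun r : ℝ ↦ (r : ℂ) ^ (-a) • h r⁻¹) (a - s) :=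
      hg.1.congr_fun (fun r hr ↦ by simp only [hgh r hr]) measurableSet_Ioi
    simp only [MellinConvergent.cpow_smul, hpow, ← rpow_neg_one] at hconv
    simpa using (MellinConvergent.comp_rpow (by norm_num)).1 hconv
  · rw [← neg_neg s, ← mellin_comp_inv, ← hpow, ← mellin_cpow_smul, ← hg.2]
    exact setIntegral_congr_fun measurableSet_Ioi fun r hr ↦ by simp only [hgh r hr]

variable {V : Type*} [NormedAddCommGroup V] [InnerProductSpace ℝ V] [FiniteDimensional ℝ V]
  [MeasurableSpace V] [BorelSpace V]

/-- The pairing of `f` with the Gaussian `exp (-π r ‖x‖²)`. As a function of `r`, its Mellin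
transform is a multiple of the integral of `f` against a power of `‖x‖`. -/
noncomputable def gaussianPairing (f : V → E) (r : ℝ) : E :=
  ∫ x, Complex.exp (-(π * r) * ‖x‖ ^ 2) • f x

theorem integrable_gaussian {r : ℝ} (hr : 0 < r) :
    Integrable fun x : V ↦ Complex.exp (-(π * r) * ‖x‖ ^ 2) := by
  simpa using GaussianFourier.integrable_cexp_neg_mul_sq_norm_add (V := V) (b := π * r)
    (by rw [← Complex.ofReal_mul, Complex.ofReal_re]; positivity) 0 0

theorem aestronglyMeasurable_fourier {f : V → E} (hf : Integrable f) :
    AEStronglyMeasurable (𝓕 f) :=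
  (VectorFourier.fourierIntegral_continuous continuous_fourierChar
    (innerSL ℝ).continuous₂ hf).aestronglyMeasurable

theorem integrable_gaussian_smul_fourier {f : V → E} (hf : Integrable f) {r : ℝ} (hr : 0 < r) :
    Integrable fun ξ ↦ Complex.exp (-(π * r) * ‖ξ‖ ^ 2) • 𝓕 f ξ :=
  (integrable_gaussian hr).smul_bdd (∫ x, ‖f x‖) (aestronglyMeasurable_fourier hf)
    (.of_forall fun ξ ↦ VectorFourier.norm_fourierIntegral_le_integral_norm _ _ _ f ξ)

theorem fourier_gaussian {r : ℝ} (hr : 0 < r) (x : V) :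
    𝓕 (fun y : V ↦ Complex.exp (-(π * (r⁻¹ : ℝ)) * ‖y‖ ^ 2)) x =
      (r : ℂ) ^ (finrank ℝ V / 2 : ℂ) * Complex.exp (-(π * r) * ‖x‖ ^ 2) := by
  have hr' : (r : ℂ) ≠ 0 := by exact_mod_cast hr.ne'
  rw [fourier_gaussian_innerProductSpace
    (by rw [← Complex.ofReal_mul, Complex.ofReal_re]; positivity)]
  push_cast
  congr 2 <;> field_simp

theorem gaussianPairing_eq_smul_gaussianPairing_fourier [CompleteSpace E]
    {f : V → E} (hf : Integrable f) {r : ℝ} (hr : 0 < r) :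
    gaussianPairing f r =
      (r : ℂ) ^ (-(finrank ℝ V / 2 : ℂ)) • gaussianPairing (𝓕 f) r⁻¹ := by
  have hpair : ∫ x, 𝓕 (fun y : V ↦ Complex.exp (-(π * (r⁻¹ : ℝ)) * ‖y‖ ^ 2)) x • f x =
      gaussianPairing (𝓕 f) r⁻¹ := by
    have hflip := VectorFourier.integral_fourierIntegral_smul_eq_flip (L := innerₗ V) (μ := volume)
      (ν := volume) continuous_fourierChar (innerSL ℝ).continuous₂
      (integrable_gaussian (V := V) (inv_pos.2 hr)) hf
    rwa [flip_innerₗ] at hflip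
  rw [← hpair]
  simp_rw [fourier_gaussian hr, mul_smul, integral_smul]
  rw [smul_smul, ← Complex.cpow_add _ _ (by exact_mod_cast hr.ne'), neg_add_cancel,
    Complex.cpow_zero, one_smul, gaussianPairing]

theorem aestronglyMeasurable_cpow_mul_gaussian_smul {f : V → E} (hfm : AEStronglyMeasurable f)
    {s : ℂ} :
    AEStronglyMeasurable (fun p : V × ℝ ↦
      ((p.2 : ℂ) ^ (s / 2 - 1) * Complex.exp (-(π * p.2) * ‖p.1‖ ^ 2)) • f p.1)
      (volume.prod (volume.restrict (Ioi 0))) :=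
  (Measurable.aestronglyMeasurable (by fun_prop)).smul hfm.comp_fst

open scoped ComplexOrder in
theorem norm_gaussianPairing {f : V → ℂ} (hf0 : 0 ≤ f) (r : ℝ) :
    ‖gaussianPairing f r‖ = ∫ x, ‖Complex.exp (-(π * r) * ‖x‖ ^ 2) • f x‖ := by
  have hnonneg (x : V) : 0 ≤ Complex.exp (-(π * r) * ‖x‖ ^ 2) • f x := by
    rw [gaussian_eq_ofReal]
    exact mul_nonneg (by exact_mod_cast exp_nonneg _) (hf0 x)
  rw [← Complex.norm_of_nonneg (integral_nonneg fun x ↦ norm_nonneg _), ← integral_complex_ofReal,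
    gaussianPairing]
  exact congrArg _ (integral_congr_ae
    (.of_forall fun x ↦ (RCLike.norm_of_nonneg' (hnonneg x)).symm))

theorem integrable_prod_cpow_mul_gaussian_smul [Nontrivial V] {f : V → E}
    (hfm : AEStronglyMeasurable f) {s : ℂ} (hs : 0 < s.re)
    (hf : Integrable fun x ↦ (‖x‖ : ℂ) ^ (-s) • f x) :
    Integrable (fun p : V × ℝ ↦
      ((p.2 : ℂ) ^ (s / 2 - 1) * Complex.exp (-(π * p.2) * ‖p.1‖ ^ 2)) • f p.1)
      (volume.prod (volume.restrict (Ioi 0))) := by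
  refine (integrable_prod_iff (aestronglyMeasurable_cpow_mul_gaussian_smul hfm)).2
    ⟨?_, (hf.norm.const_mul ‖Gammaℝ s.re‖).congr ?_⟩
  · filter_upwards [Measure.ae_ne volume 0] with x hx
    exact (hasMellin_gaussian hs (norm_pos_iff.2 hx)).1.smul_const (f x)
  · filter_upwards [Measure.ae_ne volume 0] with x hx
    simp only [norm_smul _ (f x)]
    rw [integral_mul_const, integral_norm_cpow_mul_gaussian hs (norm_pos_iff.2 hx), mul_assoc]

theorem hasMellin_gaussianPairing [Nontrivial V] [CompleteSpace E] {f : V → E}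
    (hfm : AEStronglyMeasurable f) {s : ℂ} (hs : 0 < s.re)
    (hf : Integrable fun x ↦ (‖x‖ : ℂ) ^ (-s) • f x) :
    HasMellin (gaussianPairing f) (s / 2) (Gammaℝ s • ∫ x, (‖x‖ : ℂ) ^ (-s) • f x) := by
  have hint := integrable_prod_cpow_mul_gaussian_smul hfm hs hf
  have hswap (r : ℝ) : (r : ℂ) ^ (s / 2 - 1) • gaussianPairing f r =
      ∫ x, ((r : ℂ) ^ (s / 2 - 1) * Complex.exp (-(π * r) * ‖x‖ ^ 2)) • f x := by
    simp_rw [gaussianPairing, mul_smul, integral_smul]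
  refine ⟨by simpa only [MellinConvergent, hswap, IntegrableOn] using hint.integral_prod_right, ?_⟩
  simp_rw [mellin, hswap]
  rw [← integral_integral_swap hint, ← integral_smul]
  refine integral_congr_ae ?_
  filter_upwards [Measure.ae_ne volume 0] with x hx
  rw [integral_smul_const, integral_cpow_mul_gaussian hs (norm_pos_iff.2 hx), mul_smul]

open scoped ComplexOrder in
theorem integrable_norm_cpow_smul_of_mellinConvergent [Nontrivial V] {f : V → ℂ}
    (hfm : AEStronglyMeasurable f) (hf0 : 0 ≤ f)
    (hf : ∀ r : ℝ, 0 < r → Integrable fun x ↦ Complex.exp (-(π * r) * ‖x‖ ^ 2) • f x)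
    {s : ℂ} (hs : 0 < s.re) (hconv : MellinConvergent (gaussianPairing f) (s / 2)) :
    Integrable fun x ↦ (‖x‖ : ℂ) ^ (-s) • f x := by
  have hint : Integrable (fun p : V × ℝ ↦
      ((p.2 : ℂ) ^ (s / 2 - 1) * Complex.exp (-(π * p.2) * ‖p.1‖ ^ 2)) • f p.1)
      (volume.prod (volume.restrict (Ioi 0))) := by
    refine (integrable_prod_iff' (aestronglyMeasurable_cpow_mul_gaussian_smul hfm)).2
      ⟨?_, hconv.norm.congr (.of_forall fun r ↦ ?_)⟩
    · filter_upwards [ae_restrict_mem measurableSet_Ioi] with r hr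
      simpa only [mul_smul] using (hf r hr).fun_smul ((r : ℂ) ^ (s / 2 - 1))
    · simp only [mul_smul, norm_smul]
      rw [integral_const_mul, norm_gaussianPairing hf0]
      simp only [norm_smul]
  refine (hint.integral_prod_left.smul (Gammaℝ s)⁻¹).congr ?_
  filter_upwards [Measure.ae_ne volume 0] with x hx
  simp only [Pi.smul_apply]
  rw [integral_smul_const, integral_cpow_mul_gaussian hs (norm_pos_iff.2 hx), mul_smul,
    inv_smul_smul₀ (Complex.Gammaℝ_ne_zero_of_re_pos hs)]

open scoped ComplexOrder in
theorem Gammaℝ_smul_integral_norm_cpow_smul_fourier {f : V → ℂ} (hf : Integrable f) (hf0 : 0 ≤ 𝓕 f)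
    {s : ℂ} (hs0 : 0 < s.re) (hs1 : s.re < finrank ℝ V)
    (hsf : Integrable fun x ↦ (‖x‖ : ℂ) ^ (s - finrank ℝ V) • f x) :
    Gammaℝ s • ∫ ξ, (‖ξ‖ : ℂ) ^ (-s) • 𝓕 f ξ =
      Gammaℝ (finrank ℝ V - s) • ∫ x, (‖x‖ : ℂ) ^ (s - finrank ℝ V) • f x := by
  have : Nontrivial V :=
    nontrivial_of_finrank_pos (R := ℝ) (by exact_mod_cast hs0.trans hs1)
  rw [← neg_sub] at hsf
  have hmellin : HasMellin (gaussianPairing (𝓕 f)) (s / 2) _ :=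
    hasMellin_of_eq_cpow_smul_inv (a := finrank ℝ V / 2)
      (fun r hr ↦ gaussianPairing_eq_smul_gaussianPairing_fourier hf hr)
      (sub_div (finrank ℝ V : ℂ) s 2 ▸
        hasMellin_gaussianPairing hf.1 (by simpa using hs1) hsf)
  have hfm := aestronglyMeasurable_fourier hf
  have hint := integrable_norm_cpow_smul_of_mellinConvergent hfm hf0
    (fun r hr ↦ integrable_gaussian_smul_fourier hf hr) hs0 hmellin.1
  rw [← (hasMellin_gaussianPairing hfm hs0 hint).2, hmellin.2, neg_sub]

end GaussianPairing

section Autocorrelation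

open FourierTransform ComplexConjugate

variable {G 𝕜 : Type*} [AddCommGroup G] [MeasureSpace G] [RCLike 𝕜]

/-- The autocorrelation `t ↦ ∫ u(x) conj(u(x - t)) dx` of a function on an additive group. -/
noncomputable def autocorrelation (u : G → 𝕜) (t : G) : 𝕜 :=
  ∫ x, u x * conj (u (x - t))

theorem autocorrelation_ofReal (u : G → ℝ) (t : G) :
    autocorrelation (fun x ↦ (u x : 𝕜)) t = ((autocorrelation u t : ℝ) : 𝕜) := by
  simp only [autocorrelation, ← integral_ofReal, RCLike.conj_ofReal, conj_trivial,
    RCLike.ofReal_mul]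

theorem autocorrelation_eq_convolution (u : G → 𝕜) :
    autocorrelation u =
      convolution u (fun x ↦ conj (u (-x))) (ContinuousLinearMap.mul 𝕜 𝕜) volume := by
  ext t
  simp [autocorrelation, convolution]

theorem integrable_conj_comp_neg [MeasurableNeg G] [(volume : Measure G).IsNegInvariant]
    {u : G → 𝕜} (hu : Integrable u) :
    Integrable fun x ↦ conj (u (-x)) :=
  RCLike.conjLIE.integrable_comp_iff.2 hu.comp_neg

variable [MeasurableAdd₂ G] [(volume : Measure G).IsAddRightInvariant]

theorem autocorrelation_neg (u : G → 𝕜) (t : G) :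
    autocorrelation u (-t) = conj (autocorrelation u t) := by
  rw [autocorrelation, autocorrelation, ← integral_conj, ← integral_sub_right_eq_self _ t]
  simp [mul_comm]

theorem integrable_mul_conj_comp_sub {u : G → 𝕜} (hu : MemLp u 2) (t : G) :
    Integrable fun x ↦ u x * conj (u (x - t)) :=
  hu.integrable_mul (hu.comp_measurePreserving (measurePreserving_sub_right volume t)).star

theorem norm_autocorrelation_le {u : G → 𝕜} (hu : MemLp u 2) (t : G) :
    ‖autocorrelation u t‖ ≤ ∫ x, ‖u x‖ ^ 2 := by
  have hsq : Integrable fun x ↦ ‖u x‖ ^ 2 := hu.norm.integrable_sq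
  have hsq' : Integrable fun x ↦ ‖u (x - t)‖ ^ 2 := hsq.comp_sub_right t
  calc ‖autocorrelation u t‖ ≤ ∫ x, ‖u x * conj (u (x - t))‖ := norm_integral_le_integral_norm _
    _ ≤ ∫ x, (‖u x‖ ^ 2 + ‖u (x - t)‖ ^ 2) / 2 := by
      refine integral_mono (integrable_mul_conj_comp_sub hu t).norm
        ((hsq.add hsq').div_const 2) fun x ↦ ?_
      simp only [norm_mul, RCLike.norm_conj]
      linarith [two_mul_le_add_sq ‖u x‖ ‖u (x - t)‖]
    _ = ∫ x, ‖u x‖ ^ 2 := by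
      rw [integral_div, integral_add hsq hsq', integral_sub_right_eq_self (fun x ↦ ‖u x‖ ^ 2) t,
        add_self_div_two]

theorem integrable_mul_autocorrelation_integrand [SFinite (volume : Measure G)] [MeasurableNeg G]
    {u k : G → ℝ} {s : Set G} (hu : MemLp u 2) (hk : AEStronglyMeasurable k (volume.restrict s))
    (hku : IntegrableOn (fun t ↦ k t * autocorrelation (fun x ↦ ‖u x‖) t) s) :
    Integrable (fun p : G × G ↦ k p.2 * (u p.1 * u (p.1 - p.2)))
      (volume.prod (volume.restrict s)) := by
  have hsub : AEStronglyMeasurable (fun p : G × G ↦ u (p.1 - p.2))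
      (volume.prod (volume.restrict s)) :=
    (hu.1.comp_quasiMeasurePreserving
      (quasiMeasurePreserving_sub_of_right_invariant volume volume)).mono_ac
      (Measure.AbsolutelyContinuous.rfl.prod Measure.absolutelyContinuous_restrict)
  refine (integrable_prod_iff' (hk.comp_snd.mul (hu.1.comp_fst.mul hsub))).2
    ⟨.of_forall fun t ↦ by simpa using (integrable_mul_conj_comp_sub hu t).const_mul (k t),
      hku.norm.congr (.of_forall fun t ↦ ?_)⟩
  have hnonneg : 0 ≤ autocorrelation (fun x ↦ ‖u x‖) t :=
    integral_nonneg fun x ↦ mul_nonneg (norm_nonneg (u x)) (norm_nonneg (u (x - t)))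
  simp only [Pi.mul_apply, norm_mul, Real.norm_of_nonneg hnonneg]
  rw [integral_const_mul]
  rfl

theorem integral_setIntegral_mul_comp_sub_mul [SFinite (volume : Measure G)] [MeasurableNeg G]
    {u k : G → ℝ} {s : Set G} (hu : MemLp u 2) (hk : AEStronglyMeasurable k (volume.restrict s))
    (hku : IntegrableOn (fun t ↦ k t * autocorrelation (fun x ↦ ‖u x‖) t) s) :
    ∫ x, (∫ t in s, k t * u (x - t)) * u x = ∫ t in s, k t * autocorrelation u t := by
  simp_rw [autocorrelation, ← integral_const_mul, conj_trivial]
  rw [← integral_integral_swap (integrable_mul_autocorrelation_integrand hu hk hku)]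
  simp_rw [← integral_mul_const]
  congr! 4
  ring

theorem integrable_autocorrelation [SFinite (volume : Measure G)] [MeasurableNeg G]
    [(volume : Measure G).IsNegInvariant] {u : G → 𝕜} (hu : Integrable u) :
    Integrable (autocorrelation u) := by
  rw [autocorrelation_eq_convolution]
  exact hu.integrable_convolution _ (integrable_conj_comp_neg hu)

theorem fourier_conj_comp_neg {V : Type*} [NormedAddCommGroup V] [InnerProductSpace ℝ V]
    [FiniteDimensional ℝ V] [MeasurableSpace V] [BorelSpace V] (u : V → ℂ) (ξ : V) :
    𝓕 (fun x ↦ conj (u (-x))) ξ = conj (𝓕 u ξ) := by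
  rw [Real.fourier_eq', Real.fourier_eq', ← integral_conj, ← integral_neg_eq_self]
  simp [← Complex.exp_conj, Complex.conj_ofNat]

theorem fourier_autocorrelation {V : Type*} [NormedAddCommGroup V] [InnerProductSpace ℝ V]
    [FiniteDimensional ℝ V] [MeasurableSpace V] [BorelSpace V] {u : V → ℂ}
    (hu : Integrable u) (ξ : V) :
    𝓕 (autocorrelation u) ξ = (‖𝓕 u ξ‖ ^ 2 : ℝ) := by
  rw [autocorrelation_eq_convolution,
    Real.fourier_mul_convolution_eq hu (integrable_conj_comp_neg hu), fourier_conj_comp_neg,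
    Complex.mul_conj']
  norm_cast

end Autocorrelation

section RealLine

open Real FourierTransform Module ComplexConjugate

theorem mellinConvergent_of_norm_le {E : Type*} [NormedAddCommGroup E] [NormedSpace ℂ E]
    {f : ℝ → E} (hf : IntegrableOn f (Ioi 0)) {C : ℝ} (hC : ∀ t, 0 < t → ‖f t‖ ≤ C) {s : ℂ}
    (hs0 : 0 < s.re) (hs1 : s.re ≤ 1) :
    MellinConvergent f s := by
  have hpow : Measurable fun t : ℝ ↦ (t : ℂ) ^ (s - 1) := by fun_prop
  rw [MellinConvergent, ← Ioc_union_Ioi_eq_Ioi zero_le_one]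
  refine IntegrableOn.union ?_ ?_
  · have hcpow : IntegrableOn (fun t : ℝ ↦ (t : ℂ) ^ (s - 1)) (Ioc 0 1) := by
      rw [← intervalIntegrable_iff_integrableOn_Ioc_of_le zero_le_one]
      exact intervalIntegral.intervalIntegrable_cpow' (by simpa using hs0)
    refine hcpow.smul_bdd C (hf.mono_set Ioc_subset_Ioi_self).1 ?_
    filter_upwards [ae_restrict_mem measurableSet_Ioc] with t ht using hC t ht.1
  · refine (hf.mono_set (Ioi_subset_Ioi zero_le_one)).bdd_smul 1 hpow.aestronglyMeasurable ?_
    filter_upwards [ae_restrict_mem measurableSet_Ioi] with t (ht : 1 < t)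
    rw [Complex.norm_cpow_eq_rpow_re_of_pos (zero_lt_one.trans ht)]
    exact rpow_le_one_of_one_le_of_nonpos ht.le (by simpa using hs1)

theorem integrableOn_Iic_of_even {E : Type*} [NormedAddCommGroup E] {g : ℝ → E}
    (heven : Function.Even g) (hg : IntegrableOn g (Ioi 0)) : IntegrableOn g (Iic 0) := by
  rw [← (Measure.measurePreserving_neg (volume : Measure ℝ)).integrableOn_comp_preimage
    (MeasurableEquiv.neg ℝ).measurableEmbedding, neg_preimage, neg_Iic, neg_zero,
    integrableOn_Ici_iff_integrableOn_Ioi]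
  simpa only [Function.comp_def, heven _] using hg

theorem integrable_of_even {E : Type*} [NormedAddCommGroup E] {g : ℝ → E}
    (heven : Function.Even g) (hg : IntegrableOn g (Ioi 0)) : Integrable g := by
  rw [← integrableOn_univ, ← Iic_union_Ioi (a := (0 : ℝ))]
  exact (integrableOn_Iic_of_even heven hg).union hg

theorem integral_of_even {E : Type*} [NormedAddCommGroup E] [NormedSpace ℝ E] {g : ℝ → E}
    (heven : Function.Even g) (hg : IntegrableOn g (Ioi 0)) :
    ∫ t, g t = (2 : ℝ) • ∫ t in Ioi 0, g t := by
  have hneg : ∫ t in Iic 0, g t = ∫ t in Ioi 0, g t := by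
    simpa only [heven _, neg_zero] using (integral_comp_neg_Ioi 0 g).symm
  rw [← intervalIntegral.integral_Iic_add_Ioi (integrableOn_Iic_of_even heven hg) hg, hneg,
    two_smul]

theorem integrable_norm_cpow_smul_of_even {E : Type*} [NormedAddCommGroup E] [NormedSpace ℂ E]
    {f : ℝ → E} (heven : Function.Even f) {s : ℂ} (hf : MellinConvergent f s) :
    Integrable fun t : ℝ ↦ (‖t‖ : ℂ) ^ (s - 1) • f t :=
  integrable_of_even (fun t ↦ by simp only [norm_neg, heven t])
    (hf.congr_fun (fun t (ht : 0 < t) ↦ by simp only [norm_of_nonneg ht.le]) measurableSet_Ioi)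

theorem integral_norm_cpow_smul_of_even {E : Type*} [NormedAddCommGroup E] [NormedSpace ℂ E]
    {f : ℝ → E} (heven : Function.Even f) {s : ℂ} (hf : MellinConvergent f s) :
    ∫ t : ℝ, (‖t‖ : ℂ) ^ (s - 1) • f t = (2 : ℝ) • mellin f s := by
  rw [integral_of_even (fun t ↦ by simp only [norm_neg, heven t])
    (integrable_norm_cpow_smul_of_even heven hf).integrableOn]
  exact congrArg _ (setIntegral_congr_fun measurableSet_Ioi fun t (ht : 0 < t) ↦ by
    simp only [norm_of_nonneg ht.le])

theorem RLleft_eq_integral_Ioi (β : ℝ) {u : ℝ → ℝ} (hu : Function.support u ⊆ Ici 0) (x : ℝ) :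
    RLleft β u x = (Gamma β)⁻¹ * ∫ t in Ioi 0, t ^ (β - 1) * u (x - t) := by
  have hind : (Ico 0 x).indicator (fun s ↦ (x - s) ^ (β - 1) * u s) =
      fun s ↦ (Ioi 0).indicator (fun t ↦ t ^ (β - 1) * u (x - t)) (x - s) := by
    ext s
    have hs : s < 0 → u s = 0 := fun h ↦ by_contra fun h' ↦ (hu h').not_gt h
    simp only [indicator_apply, mem_Ico, mem_Ioi, sub_sub_cancel]
    grind
  rw [RLleft, ← integral_Ico_eq_integral_Ioo, ← integral_indicator measurableSet_Ico, hind,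
    integral_sub_left_eq_self, integral_indicator measurableSet_Ioi]

theorem cpow_smul_ofReal {r : ℝ} (hr : 0 < r) (a x : ℝ) :
    (r : ℂ) ^ ((a : ℂ) - 1) • (x : ℂ) = ((r ^ (a - 1) * x : ℝ) : ℂ) := by
  rw [smul_eq_mul, Complex.ofReal_mul, Complex.ofReal_cpow hr.le, Complex.ofReal_sub,
    Complex.ofReal_one]

theorem mellinConvergent_ofReal_iff {f : ℝ → ℝ} {a : ℝ} :
    MellinConvergent (fun t ↦ (f t : ℂ)) a ↔ IntegrableOn (fun t ↦ t ^ (a - 1) * f t) (Ioi 0) := by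
  rw [MellinConvergent,
    integrableOn_congr_fun (fun t (ht : t ∈ Ioi 0) ↦ cpow_smul_ofReal ht a (f t))
      measurableSet_Ioi]
  exact ⟨fun h ↦ h.re, fun h ↦ h.ofReal⟩

theorem mellin_ofReal (f : ℝ → ℝ) (a : ℝ) :
    mellin (fun t ↦ (f t : ℂ)) a = (∫ t in Ioi 0, t ^ (a - 1) * f t : ℝ) := by
  rw [mellin, setIntegral_congr_fun measurableSet_Ioi fun t ht ↦ cpow_smul_ofReal ht a (f t)]
  exact integral_ofReal

theorem mellinConvergent_autocorrelation {u : ℝ → ℝ} (hu1 : Integrable u) (hu2 : MemLp u 2)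
    {s : ℂ} (hs0 : 0 < s.re) (hs1 : s.re ≤ 1) :
    MellinConvergent (fun t ↦ ((autocorrelation u t : ℝ) : ℂ)) s :=
  mellinConvergent_of_norm_le (integrable_autocorrelation hu1).ofReal.integrableOn
    (fun t _ ↦ (Complex.norm_real _).trans_le (norm_autocorrelation_le hu2 t)) hs0 hs1

theorem mellin_autocorrelation {u : ℝ → ℝ} (hu1 : Integrable u) (hu2 : MemLp u 2)
    {s : ℂ} (hs0 : 0 < s.re) (hs1 : s.re < 1) :
    mellin (fun t ↦ ((autocorrelation u t : ℝ) : ℂ)) s =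
      (2 * π) ^ (-s) * Complex.Gamma s * Complex.cos (π * s / 2) *
        ∫ ξ : ℝ, (‖ξ‖ : ℂ) ^ (-s) * (‖𝓕 (fun x ↦ (u x : ℂ)) ξ‖ ^ 2 : ℝ) := by
  have huC : Integrable fun x ↦ (u x : ℂ) := hu1.ofReal
  have hf := integrable_autocorrelation huC
  have hfourier := fourier_autocorrelation huC
  have hcast : autocorrelation (fun x ↦ (u x : ℂ)) = fun t ↦ ((autocorrelation u t : ℝ) : ℂ) :=
    funext (autocorrelation_ofReal u)
  rw [hcast] at hf hfourier
  have heven : Function.Even fun t ↦ ((autocorrelation u t : ℝ) : ℂ) := fun t ↦ by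
    simp only [autocorrelation_neg, conj_trivial]
  have hconv := mellinConvergent_autocorrelation hu1 hu2 hs0 hs1.le
  have hval := integral_norm_cpow_smul_of_even heven hconv
  have hfe := Gammaℝ_smul_integral_norm_cpow_smul_fourier hf
    (fun ξ ↦ (hfourier ξ).symm ▸ Complex.zero_le_real.2 (sq_nonneg _)) hs0 (by simpa using hs1)
    (by simpa using integrable_norm_cpow_smul_of_even heven hconv)
  simp only [smul_eq_mul, Complex.real_smul, Complex.ofReal_ofNat] at hval hfe
  simp only [finrank_self, Nat.cast_one, hval, hfourier] at hfe
  have hΓ_ne_zero : Complex.Gammaℝ (1 - s) ≠ 0 :=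
    Complex.Gammaℝ_ne_zero_of_re_pos (by simpa using hs1)
  have hpole (n : ℕ) : s ≠ -(2 * n + 1) := fun h ↦ by
    have hre : s.re = -(2 * n + 1) := by simp [h]
    linarith [n.cast_nonneg (α := ℝ)]
  have hΓ := Complex.Gammaℝ_div_Gammaℝ_one_sub hpole
  rw [div_eq_iff hΓ_ne_zero, Complex.Gammaℂ_def] at hΓ
  rw [hΓ] at hfe
  refine mul_left_cancel₀ (mul_ne_zero hΓ_ne_zero two_ne_zero) ?_
  linear_combination -hfe

theorem integral_rpow_mul_autocorrelation {u : ℝ → ℝ} (hu1 : Integrable u) (hu2 : MemLp u 2)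
    {β : ℝ} (hβ0 : 0 < β) (hβ1 : β < 1) :
    ∫ t in Ioi 0, t ^ (β - 1) * autocorrelation u t =
      (2 * π) ^ (-β) * Gamma β * cos (π * β / 2) *
        ∫ ξ : ℝ, |ξ| ^ (-β) * ‖𝓕 (fun x ↦ (u x : ℂ)) ξ‖ ^ 2 := by
  have hcpow {r : ℝ} (hr : 0 ≤ r) : (r : ℂ) ^ (-β : ℂ) = (r ^ (-β) : ℝ) := by
    rw [Complex.ofReal_cpow hr, Complex.ofReal_neg]
  have hmellin := mellin_autocorrelation hu1 hu2 (s := β) hβ0 hβ1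
  simp only [mellin_ofReal, hcpow (norm_nonneg _)] at hmellin
  have h2π := hcpow two_pi_pos.le
  push_cast at h2π
  rw [h2π, Complex.Gamma_ofReal] at hmellin
  norm_cast at hmellin

theorem FT_eq_fourier (u : ℝ → ℝ) (ξ : ℝ) :
    FT u ξ = ((2 * π) ^ (-(1 : ℝ) / 2) : ℝ) * 𝓕 (fun x ↦ (u x : ℂ)) (ξ / (2 * π)) := by
  rw [FT, fourier_real_eq_integral_exp_smul]
  congr! 3 with x
  rw [smul_eq_mul, mul_comm]
  congr 2
  push_cast
  field_simp

theorem integral_rpow_mul_norm_FT_sq (β : ℝ) (u : ℝ → ℝ) :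
    ∫ ξ, |ξ| ^ (-β) * ‖FT u ξ‖ ^ 2 =
      (2 * π) ^ (-β) * ∫ ξ, |ξ| ^ (-β) * ‖𝓕 (fun x ↦ (u x : ℂ)) ξ‖ ^ 2 := by
  have hπ : (0 : ℝ) < 2 * π := by positivity
  have hscale (ξ : ℝ) : |ξ| ^ (-β) * ‖FT u ξ‖ ^ 2 = (2 * π)⁻¹ * ((2 * π) ^ (-β) *
      (|ξ / (2 * π)| ^ (-β) * ‖𝓕 (fun x ↦ (u x : ℂ)) (ξ / (2 * π))‖ ^ 2)) := by
    have hsq : ((2 * π) ^ (-(1 : ℝ) / 2)) ^ 2 = (2 * π)⁻¹ := by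
      rw [← rpow_natCast, ← rpow_mul hπ.le, ← rpow_neg_one]; norm_num
    rw [FT_eq_fourier, norm_mul, Complex.norm_of_nonneg (by positivity), mul_pow, hsq, abs_div,
      abs_of_pos hπ, div_rpow (abs_nonneg ξ) hπ.le]
    field_simp
  simp_rw [hscale]
  rw [integral_const_mul, Measure.integral_comp_div
    (fun η ↦ (2 * π) ^ (-β) * (|η| ^ (-β) * ‖𝓕 (fun x ↦ (u x : ℂ)) η‖ ^ 2)), abs_of_pos hπ,
    smul_eq_mul, inv_mul_cancel_left₀ hπ.ne', integral_const_mul]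

theorem integral_RLleft_mul_self {β : ℝ} (hβ0 : 0 < β) (hβ1 : β ≤ 1) {u : ℝ → ℝ}
    (hu1 : Integrable u) (hu2 : MemLp u 2) (hsupp : Function.support u ⊆ Ici 0) :
    ∫ x, RLleft β u x * u x = (Gamma β)⁻¹ * ∫ t in Ioi 0, t ^ (β - 1) * autocorrelation u t := by
  have hint : IntegrableOn (fun t ↦ t ^ (β - 1) * autocorrelation (fun x ↦ ‖u x‖) t) (Ioi 0) := by
    rw [← mellinConvergent_ofReal_iff]
    exact mellinConvergent_autocorrelation hu1.norm hu2.norm hβ0 hβ1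
  rw [← integral_setIntegral_mul_comp_sub_mul hu2 (by fun_prop) hint, ← integral_const_mul]
  simp_rw [RLleft_eq_integral_Ioi β hsupp, mul_assoc]

end RealLine

theorem riemannLiouville_coercive_general {β : ℝ} (hβ0 : 0 < β) (hβ1 : β < 1) {φ : ℝ → ℝ}
    (hφ1 : Integrable φ) (hφ2 : MemLp φ 2) {s : Set ℝ} (hφs : Function.support φ ⊆ s)
    (hs : s ⊆ Ici 0) :
    (∫ x in s, RLleft β φ x * φ x =
        Real.cos (Real.pi * β / 2) * ∫ ξ : ℝ, |ξ| ^ (-β) * ‖FT φ ξ‖ ^ 2) ∧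
      0 ≤ ∫ x in s, RLleft β φ x * φ x := by
  have hfull : ∫ x in s, RLleft β φ x * φ x = ∫ x, RLleft β φ x * φ x :=
    setIntegral_eq_integral_of_forall_compl_eq_zero fun x hx ↦ by
      rw [Function.notMem_support.1 (mt (@hφs x) hx), mul_zero]
  have heq : ∫ x in s, RLleft β φ x * φ x =
      Real.cos (Real.pi * β / 2) * ∫ ξ : ℝ, |ξ| ^ (-β) * ‖FT φ ξ‖ ^ 2 := by
    rw [hfull, integral_RLleft_mul_self hβ0 hβ1.le hφ1 hφ2 (hφs.trans hs),
      integral_rpow_mul_autocorrelation hφ1 hφ2 hβ0 hβ1, integral_rpow_mul_norm_FT_sq]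
    field_simp [(Real.Gamma_pos_of_pos hβ0).ne']
  have hcos : 0 ≤ Real.cos (Real.pi * β / 2) :=
    Real.cos_nonneg_of_mem_Icc ⟨by nlinarith [Real.pi_pos], by nlinarith [Real.pi_pos]⟩
  exact ⟨heq, heq ▸ mul_nonneg hcos (integral_nonneg fun ξ ↦ by positivity)⟩

/-- coercivity of the Riemann–Liouville fractional integral: for
`0 < β < 1` and `φ ∈ C_c^∞((0,1))` (extended by zero),
`∫_0^1 (D^{-β}φ) φ ≥ cos(πβ/2) ∫_ℝ |ξ|^{-β} |Fφ(ξ)|² dξ ≥ 0`. -/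
theorem riemannLiouville_coercive (β : ℝ) (hβ0 : 0 < β) (hβ1 : β < 1)
    (φ : ℝ → ℝ) (hφ : ContDiff ℝ (⊤ : ℕ∞) φ) (hsupp : HasCompactSupport φ)
    (hsupp01 : tsupport φ ⊆ Ioo (0 : ℝ) 1) :
    ((∫ x in Ioo (0 : ℝ) 1, RLleft β φ x * φ x)
        ≥ Real.cos (Real.pi * β / 2) * (∫ ξ : ℝ, |ξ| ^ (-β) * ‖FT φ ξ‖ ^ 2)) ∧
      (0 ≤ ∫ x in Ioo (0 : ℝ) 1, RLleft β φ x * φ x) := by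
  have h := riemannLiouville_coercive_general hβ0 hβ1
    (hφ.continuous.integrable_of_hasCompactSupport hsupp)
    (hφ.continuous.memLp_of_hasCompactSupport hsupp)
    ((subset_tsupport φ).trans hsupp01) (fun _ hx ↦ hx.1.le)
  exact ⟨h.1.ge, h.2⟩
end

section
/- Let s ∈ (0, 1/2) and 𝒯 a quasi-uniform partition of I=(0,1) into N intervals of length ≃ 1/N. Then for all v ∈ H^s(I), ‖v‖_{H^s(I)} ≤ C N^s (∑_{T∈𝒯} ‖v|_T‖²_{H^s(T)})^{1/2}, with C depending only on s and the quasi-uniformity constant. -/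
open MeasureTheory Set

/-- Squared `L²` norm on the interval `(a,b)`. -/
noncomputable def L2sq (a b : ℝ) (f : ℝ → ℝ) : ENNReal :=
  ∫⁻ x in Ioo a b, ENNReal.ofReal ((f x) ^ 2)

/-- Squared Sobolev–Slobodeckij seminorm of order `s` on the interval `(a,b)`. -/
noncomputable def SlobSq (s a b : ℝ) (f : ℝ → ℝ) : ENNReal :=
  ∫⁻ p in (Ioo a b) ×ˢ (Ioo a b),
    ENNReal.ofReal ((f p.1 - f p.2) ^ 2 / |p.1 - p.2| ^ (1 + 2 * s))

/-- Squared `H^s` norm on the interval `(a,b)`. -/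
noncomputable def HsSq (s a b : ℝ) (f : ℝ → ℝ) : ENNReal :=
  L2sq a b f + SlobSq s a b f

/-!
Off the diagonal blocks `T × T` one has `|v(x) - v(y)|² ≤ 2 v(x)² + 2 v(y)²`. For `x ∈ T`,
integrating `|x - y|^(-1-2s)` over `y ∉ T` leaves the Hardy weight `dist(x, ∂T)^(-2s)`, up to a
constant, so the off-diagonal part is controlled by the fractional Hardy inequality on each `T`.
By scaling, the latter costs `|T|^(-2s) ‖v‖²_{L²(T)} + |v|²_{H^s(T)}`, whence the factor `N^(2s)`.

For the Hardy inequality on `(0,h)`, compare `v(x)` with its values on `(x,2x)` for `x < h/2` and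
exchange the integrals: this bounds the Hardy norm by the seminorm, the `L²` norm and, up to a
factor `1 + δ`, the multiple `(2^(2s) - 1)/(2s)` of itself. This number is less than `1` exactly
because `s < 1/2`, so that the last term can be absorbed once the Hardy norm is known to be
finite; it is for bounded `v`, and truncation gives the general case.
-/

/-! ### Power integrals -/

lemma lintegral_Ioi_rpow {r c : ℝ} (hr : r < -1) (hc : 0 < c) :
    ∫⁻ t in Ioi c, ENNReal.ofReal (t ^ r) = ENNReal.ofReal (-c ^ (r + 1) / (r + 1)) := by
  rw [← integral_Ioi_rpow_of_lt hr hc,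
    ofReal_integral_eq_lintegral_ofReal (integrableOn_Ioi_rpow_of_lt hr hc)]
  filter_upwards [ae_restrict_mem measurableSet_Ioi] with t ht
  exact Real.rpow_nonneg (hc.trans ht).le r

lemma lintegral_Ioo_rpow {r a b : ℝ} (hr : r ≠ -1) (ha : 0 < a) (hab : a ≤ b) :
    ∫⁻ t in Ioo a b, ENNReal.ofReal (t ^ r)
      = ENNReal.ofReal ((b ^ (r + 1) - a ^ (r + 1)) / (r + 1)) := by
  have h0 : (0 : ℝ) ∉ uIcc a b := by
    rw [uIcc_of_le hab]
    exact fun h => absurd h.1 ha.not_ge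
  have hint : IntegrableOn (fun t : ℝ => t ^ r) (Ioc a b) :=
    (intervalIntegral.intervalIntegrable_rpow (.inr h0)).1
  rw [← integral_rpow (.inr ⟨hr, h0⟩), intervalIntegral.integral_of_le hab,
    Measure.restrict_congr_set Ioo_ae_eq_Ioc, ofReal_integral_eq_lintegral_ofReal hint]
  filter_upwards [ae_restrict_mem measurableSet_Ioc] with t ht
  exact Real.rpow_nonneg (ha.trans ht.1).le r

lemma half_rpow_neg {y : ℝ} (hy : 0 ≤ y) (r : ℝ) : (y / 2) ^ (-r) = 2 ^ r * y ^ (-r) := by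
  rw [Real.div_rpow hy zero_le_two, Real.rpow_neg zero_le_two, div_inv_eq_mul, mul_comm]

lemma lintegral_Ioo_half_rpow {s y : ℝ} (hs : s ≠ 0) (hy : 0 < y) :
    ∫⁻ x in Ioo (y / 2) y, ENNReal.ofReal (x ^ (-(1 + 2 * s)))
      = ENNReal.ofReal ((2 ^ (2 * s) - 1) / (2 * s)) * ENNReal.ofReal (y ^ (-(2 * s))) := by
  rw [lintegral_Ioo_rpow (by contrapose! hs; linarith) (half_pos hy) (half_le_self hy.le),
    ← ENNReal.ofReal_mul' (Real.rpow_nonneg hy.le _),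
    show -(1 + 2 * s) + 1 = -(2 * s) by ring, half_rpow_neg hy.le]
  congr 1
  field_simp
  ring

lemma lintegral_Iic_abs_sub_rpow {s a x : ℝ} (hs : 0 < s) (hx : a < x) :
    ∫⁻ y in Iic a, ENNReal.ofReal (|x - y| ^ (-(1 + 2 * s)))
      = ENNReal.ofReal (1 / (2 * s)) * ENNReal.ofReal ((x - a) ^ (-(2 * s))) := by
  have hxa : 0 < x - a := sub_pos.2 hx
  calc ∫⁻ y in Iic a, ENNReal.ofReal (|x - y| ^ (-(1 + 2 * s)))
      = ∫⁻ t in Ici (x - a), ENNReal.ofReal (|t| ^ (-(1 + 2 * s))) := by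
        rw [← (Measure.measurePreserving_sub_left volume x).setLIntegral_comp_preimage_emb
          (Homeomorph.subLeft x).measurableEmbedding
          (fun t => ENNReal.ofReal (|t| ^ (-(1 + 2 * s)))),
          preimage_const_sub_Ici, sub_sub_cancel]
    _ = ∫⁻ t in Ioi (x - a), ENNReal.ofReal (t ^ (-(1 + 2 * s))) := by
        rw [Measure.restrict_congr_set Ioi_ae_eq_Ici.symm]
        refine setLIntegral_congr_fun measurableSet_Ioi fun t ht => ?_
        simp only [abs_of_pos (hxa.trans ht)]
    _ = ENNReal.ofReal (1 / (2 * s)) * ENNReal.ofReal ((x - a) ^ (-(2 * s))) := by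
        rw [lintegral_Ioi_rpow (by linarith) hxa, ← ENNReal.ofReal_mul (by positivity),
          show -(1 + 2 * s) + 1 = -(2 * s) by ring, neg_div_neg_eq, one_div_mul_eq_div]

lemma lintegral_Ici_abs_sub_rpow {s b x : ℝ} (hs : 0 < s) (hx : x < b) :
    ∫⁻ y in Ici b, ENNReal.ofReal (|x - y| ^ (-(1 + 2 * s)))
      = ENNReal.ofReal (1 / (2 * s)) * ENNReal.ofReal ((b - x) ^ (-(2 * s))) := by
  rw [show b - x = -x - -b by ring, ← lintegral_Iic_abs_sub_rpow hs (neg_lt_neg hx),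
    ← (Measure.measurePreserving_neg volume).setLIntegral_comp_preimage_emb
      (Homeomorph.neg ℝ).measurableEmbedding _ (Iic (-b)), neg_preimage, neg_Iic, neg_neg]
  refine lintegral_congr fun y => ?_
  rw [← neg_sub', abs_neg]

/-! ### Symmetries and contractions -/

lemma l2sq_comp {a b c d : ℝ} {φ : ℝ → ℝ} (hφ : MeasurePreserving φ) (hiso : Isometry φ)
    (hpre : φ ⁻¹' Ioo c d = Ioo a b) (v : ℝ → ℝ) : L2sq a b (v ∘ φ) = L2sq c d v := by
  rw [L2sq, ← hpre]
  exact hφ.setLIntegral_comp_preimage_emb hiso.isClosedEmbedding.measurableEmbedding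
    (fun x => ENNReal.ofReal (v x ^ 2)) _

lemma slobSq_comp {s a b c d : ℝ} {φ : ℝ → ℝ} (hφ : MeasurePreserving φ) (hiso : Isometry φ)
    (hpre : φ ⁻¹' Ioo c d = Ioo a b) (v : ℝ → ℝ) : SlobSq s a b (v ∘ φ) = SlobSq s c d v := by
  have hemb := hiso.isClosedEmbedding.measurableEmbedding
  have hdist (x y : ℝ) : |φ x - φ y| = |x - y| := hiso.dist_eq x y
  rw [SlobSq, SlobSq, Measure.volume_eq_prod,
    ← (hφ.prod hφ).setLIntegral_comp_preimage_emb (hemb.prodMap hemb) _ (Ioo c d ×ˢ Ioo c d),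
    preimage_prod_map_prod, hpre]
  simp only [Prod.map_fst, Prod.map_snd, hdist, Function.comp_apply]

lemma l2sq_mono {a b : ℝ} {u v : ℝ → ℝ} (h : ∀ x, |u x| ≤ |v x|) : L2sq a b u ≤ L2sq a b v :=
  lintegral_mono fun x => ENNReal.ofReal_le_ofReal (sq_le_sq.2 (h x))

lemma slobSq_comp_le {s a b : ℝ} {φ : ℝ → ℝ} (hφ : LipschitzWith 1 φ) (v : ℝ → ℝ) :
    SlobSq s a b (φ ∘ v) ≤ SlobSq s a b v := by
  refine lintegral_mono fun p => ENNReal.ofReal_le_ofReal ?_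
  gcongr ?_ / _
  rw [sq_le_sq, Function.comp_apply, Function.comp_apply]
  simpa only [NNReal.coe_one, one_mul, Real.dist_eq] using hφ.dist_le_mul (v p.1) (v p.2)

lemma slobSq_eq_lintegral_lintegral {s a b : ℝ} {v : ℝ → ℝ} (hv : Measurable v) :
    SlobSq s a b v = ∫⁻ x in Ioo a b, ∫⁻ y in Ioo a b,
      ENNReal.ofReal ((v x - v y) ^ 2 / |x - y| ^ (1 + 2 * s)) := by
  rw [SlobSq, Measure.volume_eq_prod, setLIntegral_prod]
  fun_prop

/-! ### The fractional Hardy inequality -/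

/-- The scale-invariant form `(b - a)^(-2s) ‖v‖²_{L²} + |v|²_{H^s}` of the squared `H^s` norm on
`(a,b)`; both summands have the same homogeneity under dilations. -/
noncomputable def scaledHsSq (s a b : ℝ) (v : ℝ → ℝ) : ENNReal :=
  ENNReal.ofReal ((b - a) ^ (-(2 * s))) * L2sq a b v + SlobSq s a b v

/-- The squared Hardy norm `∫_(0,h) v(x)² x^(-2s) dx`, weighted by the distance to the
endpoint `0`. -/
noncomputable def hardySq (s h : ℝ) (v : ℝ → ℝ) : ENNReal :=
  ∫⁻ x in Ioo 0 h, ENNReal.ofReal (v x ^ 2) * ENNReal.ofReal (x ^ (-(2 * s)))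

lemma sq_le_young {δ : ℝ} (hδ : 0 < δ) (a b : ℝ) :
    a ^ 2 ≤ (1 + δ) * b ^ 2 + (1 + δ⁻¹) * (a - b) ^ 2 := by
  have hsq : (1 + δ) * b ^ 2 + (1 + δ⁻¹) * (a - b) ^ 2 - a ^ 2 = (δ * b - (a - b)) ^ 2 / δ := by
    field_simp
    ring
  have : 0 ≤ (δ * b - (a - b)) ^ 2 / δ := by positivity
  linarith

lemma ofReal_sq_mul_rpow_le {r δ x y : ℝ} (hr : 0 ≤ r) (hδ : 0 < δ) (hxy : x < y)
    (hy : y < 2 * x) (a b : ℝ) :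
    ENNReal.ofReal (a ^ 2) * ENNReal.ofReal (x ^ (-r)) ≤
      ENNReal.ofReal (1 + δ) * (ENNReal.ofReal (b ^ 2) * ENNReal.ofReal (x ^ (-r))) +
        ENNReal.ofReal (1 + δ⁻¹) * ENNReal.ofReal ((a - b) ^ 2 / |x - y| ^ r) := by
  have hx : 0 < x := by linarith
  have hdist : 0 < |x - y| := abs_pos.2 (by linarith)
  have hker : x ^ (-r) ≤ (|x - y| ^ r)⁻¹ := by
    rw [← Real.rpow_neg hdist.le]
    refine Real.rpow_le_rpow_of_nonpos hdist ?_ (by linarith)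
    rw [abs_of_neg (by linarith)]
    linarith
  rw [← ENNReal.ofReal_mul (by positivity), ← ENNReal.ofReal_mul (by positivity),
    ← ENNReal.ofReal_mul (by positivity), ← ENNReal.ofReal_mul (by positivity),
    ← ENNReal.ofReal_add (by positivity) (by positivity)]
  apply ENNReal.ofReal_le_ofReal
  calc a ^ 2 * x ^ (-r)
      ≤ ((1 + δ) * b ^ 2 + (1 + δ⁻¹) * (a - b) ^ 2) * x ^ (-r) := by
        gcongr
        exact sq_le_young hδ a b
    _ = (1 + δ) * (b ^ 2 * x ^ (-r)) + (1 + δ⁻¹) * ((a - b) ^ 2 * x ^ (-r)) := by ring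
    _ ≤ (1 + δ) * (b ^ 2 * x ^ (-r)) + (1 + δ⁻¹) * ((a - b) ^ 2 / |x - y| ^ r) := by
        rw [div_eq_mul_inv ((a - b) ^ 2)]
        gcongr

-- `x ^ (-2s)` is the integral over `y ∈ (x, 2x)` of the constant `x ^ (-(1 + 2s))`.
lemma ofReal_sq_mul_rpow_le_lintegral {s δ x : ℝ} {v : ℝ → ℝ} (hs : 0 ≤ s) (hδ : 0 < δ)
    (hx : 0 < x) (hv : Measurable v) :
    ENNReal.ofReal (v x ^ 2) * ENNReal.ofReal (x ^ (-(2 * s))) ≤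
      ENNReal.ofReal (1 + δ) * (∫⁻ y in Ioo x (2 * x),
        ENNReal.ofReal (v y ^ 2) * ENNReal.ofReal (x ^ (-(1 + 2 * s)))) +
      ENNReal.ofReal (1 + δ⁻¹) * ∫⁻ y in Ioo x (2 * x),
        ENNReal.ofReal ((v x - v y) ^ 2 / |x - y| ^ (1 + 2 * s)) := by
  have hpow : x ^ (-(1 + 2 * s)) * (2 * x - x) = x ^ (-(2 * s)) := by
    rw [show 2 * x - x = x ^ (1 : ℝ) by rw [Real.rpow_one]; ring, ← Real.rpow_add hx]
    congr 1
    ring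
  calc ENNReal.ofReal (v x ^ 2) * ENNReal.ofReal (x ^ (-(2 * s)))
      = ∫⁻ _ in Ioo x (2 * x),
          ENNReal.ofReal (v x ^ 2) * ENNReal.ofReal (x ^ (-(1 + 2 * s))) := by
        rw [setLIntegral_const, Real.volume_Ioo, mul_assoc,
          ← ENNReal.ofReal_mul (Real.rpow_nonneg hx.le _), hpow]
    _ ≤ ∫⁻ y in Ioo x (2 * x),
          (ENNReal.ofReal (1 + δ) *
              (ENNReal.ofReal (v y ^ 2) * ENNReal.ofReal (x ^ (-(1 + 2 * s)))) +
            ENNReal.ofReal (1 + δ⁻¹) *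
              ENNReal.ofReal ((v x - v y) ^ 2 / |x - y| ^ (1 + 2 * s))) :=
        setLIntegral_mono' measurableSet_Ioo fun y hy =>
          ofReal_sq_mul_rpow_le (by linarith) hδ hy.1 hy.2 _ _
    _ = _ := by
        rw [lintegral_add_right _ (by fun_prop), lintegral_const_mul _ (by fun_prop),
          lintegral_const_mul _ (by fun_prop)]

lemma lintegral_lintegral_preimage_swap {α β : Type*} [MeasurableSpace α] [MeasurableSpace β]
    {μ : Measure α} {ν : Measure β} [SFinite μ] [SFinite ν] {E : Set (α × β)}
    (hE : MeasurableSet E) {f : α → β → ENNReal} (hf : Measurable (Function.uncurry f)) :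
    ∫⁻ x, ∫⁻ y in Prod.mk x ⁻¹' E, f x y ∂ν ∂μ
      = ∫⁻ y, ∫⁻ x in (fun x => (x, y)) ⁻¹' E, f x y ∂μ ∂ν := by
  simp only [← lintegral_indicator (measurable_prodMk_left hE),
    ← lintegral_indicator (measurable_prodMk_right hE)]
  exact lintegral_lintegral_swap (f := fun x y => E.indicator (Function.uncurry f) (x, y))
    (hf.indicator hE).aemeasurable

lemma lintegral_lintegral_Ioo_two_mul_le {h : ℝ} {f : ℝ → ℝ → ENNReal}
    (hf : Measurable (Function.uncurry f)) :
    ∫⁻ x in Ioo 0 (h / 2), ∫⁻ y in Ioo x (2 * x), f x y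
      ≤ ∫⁻ y in Ioo 0 h, ∫⁻ x in Ioo (y / 2) y, f x y := by
  let E : Set (ℝ × ℝ) := {p | p.1 < p.2 ∧ p.2 < 2 * p.1}
  have hE : MeasurableSet E :=
    (measurableSet_lt measurable_fst measurable_snd).inter
      (measurableSet_lt measurable_snd (measurable_fst.const_mul 2))
  have hsection (y : ℝ) : (fun x => (x, y)) ⁻¹' E = Ioo (y / 2) y := by
    ext x
    exact and_comm.trans (and_congr_left' (div_lt_iff₀' two_pos).symm)
  calc ∫⁻ x in Ioo 0 (h / 2), ∫⁻ y in Ioo x (2 * x), f x y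
      = ∫⁻ x in Ioo 0 (h / 2), ∫⁻ y in Prod.mk x ⁻¹' E, f x y ∂volume.restrict (Ioo 0 h) := by
        refine setLIntegral_congr_fun measurableSet_Ioo fun x hx => ?_
        have hsub : Ioo x (2 * x) ⊆ Ioo 0 h :=
          Ioo_subset_Ioo hx.1.le (by linarith [hx.2])
        change _ = ∫⁻ y in Ioo x (2 * x), f x y ∂volume.restrict (Ioo 0 h)
        rw [Measure.restrict_restrict measurableSet_Ioo, inter_eq_left.2 hsub]
    _ = ∫⁻ y in Ioo 0 h, ∫⁻ x in Ioo (y / 2) y, f x y ∂volume.restrict (Ioo 0 (h / 2)) := by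
        rw [lintegral_lintegral_preimage_swap hE hf]
        simp only [hsection]
    _ ≤ ∫⁻ y in Ioo 0 h, ∫⁻ x in Ioo (y / 2) y, f x y := by
        gcongr
        exact Measure.restrict_le_self

lemma hardySq_half_le {s δ h : ℝ} {v : ℝ → ℝ} (hs : 0 < s) (hδ : 0 < δ) (hv : Measurable v) :
    hardySq s (h / 2) v ≤
      ENNReal.ofReal ((1 + δ) * ((2 ^ (2 * s) - 1) / (2 * s))) * hardySq s h v +
        ENNReal.ofReal (1 + δ⁻¹) * SlobSq s 0 h v := by
  have hnear : ∫⁻ x in Ioo 0 (h / 2), ∫⁻ y in Ioo x (2 * x),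
      ENNReal.ofReal (v y ^ 2) * ENNReal.ofReal (x ^ (-(1 + 2 * s)))
        ≤ ENNReal.ofReal ((2 ^ (2 * s) - 1) / (2 * s)) * hardySq s h v := by
    refine (lintegral_lintegral_Ioo_two_mul_le (by fun_prop)).trans_eq ?_
    rw [hardySq, ← lintegral_const_mul _ (by fun_prop)]
    refine setLIntegral_congr_fun measurableSet_Ioo fun y hy => ?_
    rw [lintegral_const_mul _ (by fun_prop), lintegral_Ioo_half_rpow hs.ne' hy.1, mul_left_comm]
  calc hardySq s (h / 2) v
      ≤ ∫⁻ x in Ioo 0 (h / 2), (ENNReal.ofReal (1 + δ) * (∫⁻ y in Ioo x (2 * x),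
            ENNReal.ofReal (v y ^ 2) * ENNReal.ofReal (x ^ (-(1 + 2 * s)))) +
          ENNReal.ofReal (1 + δ⁻¹) * ∫⁻ y in Ioo 0 h,
            ENNReal.ofReal ((v x - v y) ^ 2 / |x - y| ^ (1 + 2 * s))) := by
        refine setLIntegral_mono' measurableSet_Ioo fun x hx =>
          (ofReal_sq_mul_rpow_le_lintegral hs.le hδ hx.1 hv).trans ?_
        gcongr
        · exact hx.1.le
        · linarith [hx.2]
    _ = ENNReal.ofReal (1 + δ) * (∫⁻ x in Ioo 0 (h / 2), ∫⁻ y in Ioo x (2 * x),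
            ENNReal.ofReal (v y ^ 2) * ENNReal.ofReal (x ^ (-(1 + 2 * s)))) +
          ENNReal.ofReal (1 + δ⁻¹) * ∫⁻ x in Ioo 0 (h / 2), ∫⁻ y in Ioo 0 h,
            ENNReal.ofReal ((v x - v y) ^ 2 / |x - y| ^ (1 + 2 * s)) := by
        rw [lintegral_add_right _ (Measurable.const_mul (Measurable.lintegral_prod_right
          (by fun_prop)) _), lintegral_const_mul' _ _ ENNReal.ofReal_ne_top,
          lintegral_const_mul' _ _ ENNReal.ofReal_ne_top]
    _ ≤ _ := by
        have hsub : Ioo 0 (h / 2) ⊆ Ioo 0 h := fun x hx => ⟨hx.1, by linarith [hx.1, hx.2]⟩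
        rw [ENNReal.ofReal_mul (by positivity), mul_assoc, slobSq_eq_lintegral_lintegral hv]
        gcongr

lemma two_rpow_sub_one_div_lt_one {r : ℝ} (hr0 : 0 < r) (hr1 : r < 1) :
    ((2 : ℝ) ^ r - 1) / r < 1 := by
  have hbernoulli : (2 : ℝ) ^ r < 1 + r * 1 := by
    simpa only [one_add_one_eq_two] using
      rpow_one_add_lt_one_add_mul_self (s := 1) (by norm_num) one_ne_zero hr0 hr1
  rw [div_lt_one hr0]
  linarith

lemma hardySq_le_half_add {s h : ℝ} (hs : 0 ≤ s) (hh : 0 < h) (v : ℝ → ℝ) :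
    hardySq s h v ≤
      hardySq s (h / 2) v + ENNReal.ofReal ((h / 2) ^ (-(2 * s))) * L2sq 0 h v := by
  have hfar : ∫⁻ x in Ico (h / 2) h, ENNReal.ofReal (v x ^ 2) * ENNReal.ofReal (x ^ (-(2 * s)))
      ≤ ENNReal.ofReal ((h / 2) ^ (-(2 * s))) * L2sq 0 h v := by
    rw [L2sq, ← lintegral_const_mul' _ _ ENNReal.ofReal_ne_top]
    refine (setLIntegral_mono' measurableSet_Ico fun x hx => ?_).trans
      (lintegral_mono_set (Ico_subset_Ioo_left (half_pos hh)))
    rw [mul_comm]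
    gcongr ?_ * _
    exact ENNReal.ofReal_le_ofReal
      (Real.rpow_le_rpow_of_nonpos (half_pos hh) hx.1 (by linarith))
  rw [hardySq, ← Ioo_union_Ico_eq_Ioo (half_pos hh) (half_le_self hh.le)]
  exact (lintegral_union_le _ _ _).trans (by gcongr; exact le_rfl)

lemma ennreal_le_mul_of_le_add_mul {F A θ : ENNReal} (hF : F ≠ ⊤) (hθ : θ < 1)
    (h : F ≤ A + θ * F) : F ≤ (1 - θ)⁻¹ * A := by
  rw [← ENNReal.mul_le_iff_le_inv (tsub_pos_of_lt hθ).ne' (by finiteness),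
    ENNReal.sub_mul fun _ _ => hF, one_mul]
  exact tsub_le_iff_right.2 h

lemma hardySq_le_of_ne_top {s δ h : ℝ} {v : ℝ → ℝ} (hs : 0 < s) (hδ : 0 < δ)
    (hθ : (1 + δ) * ((2 ^ (2 * s) - 1) / (2 * s)) < 1) (hh : 0 < h) (hv : Measurable v)
    (hfin : hardySq s h v ≠ ⊤) :
    hardySq s h v ≤
      (1 - ENNReal.ofReal ((1 + δ) * ((2 ^ (2 * s) - 1) / (2 * s))))⁻¹ *
        (ENNReal.ofReal (max (2 ^ (2 * s)) (1 + δ⁻¹)) * scaledHsSq s 0 h v) := by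
  refine ennreal_le_mul_of_le_add_mul hfin (ENNReal.ofReal_lt_one.2 hθ) ?_
  calc hardySq s h v
      ≤ hardySq s (h / 2) v + ENNReal.ofReal ((h / 2) ^ (-(2 * s))) * L2sq 0 h v :=
        hardySq_le_half_add hs.le hh v
    _ ≤ ENNReal.ofReal ((1 + δ) * ((2 ^ (2 * s) - 1) / (2 * s))) * hardySq s h v +
          ENNReal.ofReal (1 + δ⁻¹) * SlobSq s 0 h v +
        ENNReal.ofReal (2 ^ (2 * s)) * (ENNReal.ofReal (h ^ (-(2 * s))) * L2sq 0 h v) := by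
        rw [half_rpow_neg hh.le, ENNReal.ofReal_mul (by positivity), mul_assoc]
        gcongr
        exact hardySq_half_le hs hδ hv
    _ ≤ ENNReal.ofReal ((1 + δ) * ((2 ^ (2 * s) - 1) / (2 * s))) * hardySq s h v +
          ENNReal.ofReal (max (2 ^ (2 * s)) (1 + δ⁻¹)) * SlobSq s 0 h v +
        ENNReal.ofReal (max (2 ^ (2 * s)) (1 + δ⁻¹)) *
          (ENNReal.ofReal (h ^ (-(2 * s))) * L2sq 0 h v) := by
        gcongr
        · exact le_max_right _ _
        · exact le_max_left _ _
    _ = _ := by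
        rw [scaledHsSq, sub_zero]
        ring

/-- The contraction `t ↦ min |t| n`, used to approximate a function by bounded ones. -/
def clampAbs (n : ℕ) (t : ℝ) : ℝ := min |t| n

lemma lipschitzWith_clampAbs (n : ℕ) : LipschitzWith 1 (clampAbs n) :=
  lipschitzWith_one_norm.min_const _

lemma abs_clampAbs (n : ℕ) (t : ℝ) : |clampAbs n t| = min |t| n :=
  abs_of_nonneg (le_min (abs_nonneg t) n.cast_nonneg)

lemma scaledHsSq_clampAbs_le (s a b : ℝ) (n : ℕ) (v : ℝ → ℝ) :
    scaledHsSq s a b (clampAbs n ∘ v) ≤ scaledHsSq s a b v := by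
  unfold scaledHsSq
  gcongr
  · refine l2sq_mono fun x => ?_
    rw [Function.comp_apply, abs_clampAbs]
    exact min_le_left _ _
  · exact slobSq_comp_le (lipschitzWith_clampAbs n) v

lemma hardySq_ne_top_of_abs_le {s h : ℝ} (hs : s < 1 / 2) {v : ℝ → ℝ} {M : ℝ}
    (hM : ∀ x, |v x| ≤ M) : hardySq s h v ≠ ⊤ := by
  have hweight : IntegrableOn (fun x : ℝ => x ^ (-(2 * s))) (Ioo 0 h) :=
    ((intervalIntegral.intervalIntegrable_rpow' (by linarith)).1).mono_set Ioo_subset_Ioc_self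
  refine ne_top_of_le_ne_top (b := ENNReal.ofReal (M ^ 2) *
    ∫⁻ x in Ioo 0 h, ENNReal.ofReal (x ^ (-(2 * s)))) (ENNReal.mul_ne_top ENNReal.ofReal_ne_top
      (Integrable.lintegral_lt_top hweight).ne) ?_
  rw [hardySq, ← lintegral_const_mul' _ _ ENNReal.ofReal_ne_top]
  refine lintegral_mono fun x => ?_
  gcongr ENNReal.ofReal ?_ * _
  exact sq_le_sq.2 ((hM x).trans (le_abs_self M))

lemma tendsto_hardySq_clampAbs (s h : ℝ) {v : ℝ → ℝ} (hv : Measurable v) :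
    Filter.Tendsto (fun n => hardySq s h (clampAbs n ∘ v)) Filter.atTop
      (nhds (hardySq s h v)) := by
  refine lintegral_tendsto_of_tendsto_of_monotone (fun n => ?_) (.of_forall fun x m n hmn => ?_)
    (.of_forall fun x => ?_)
  · have := ((lipschitzWith_clampAbs n).continuous.measurable.comp hv)
    fun_prop
  · beta_reduce
    gcongr ENNReal.ofReal ?_ * _
    rw [sq_le_sq, Function.comp_apply, Function.comp_apply, abs_clampAbs, abs_clampAbs]
    gcongr
  · obtain ⟨n₀, hn₀⟩ := exists_nat_ge |v x|
    refine tendsto_const_nhds.congr' ?_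
    filter_upwards [Filter.eventually_ge_atTop n₀] with n hn
    rw [Function.comp_apply, ← sq_abs (clampAbs n (v x)), abs_clampAbs,
      min_eq_left (hn₀.trans (Nat.cast_le.2 hn)), sq_abs]

theorem exists_hardySq_le {s : ℝ} (hs0 : 0 < s) (hs2 : s < 1 / 2) :
    ∃ K : ENNReal, K ≠ ⊤ ∧ ∀ h : ℝ, 0 < h → ∀ v : ℝ → ℝ, Measurable v →
      hardySq s h v ≤ K * scaledHsSq s 0 h v := by
  set κ : ℝ := (2 ^ (2 * s) - 1) / (2 * s)
  have hκ : κ < 1 := two_rpow_sub_one_div_lt_one (by linarith) (by linarith)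
  have hθ : (1 + (1 - κ)) * κ < 1 := by nlinarith [sq_pos_of_pos (sub_pos.2 hκ)]
  refine ⟨(1 - ENNReal.ofReal ((1 + (1 - κ)) * κ))⁻¹ *
      ENNReal.ofReal (max (2 ^ (2 * s)) (1 + (1 - κ)⁻¹)), ENNReal.mul_ne_top (ENNReal.inv_ne_top.2
    (tsub_pos_of_lt (ENNReal.ofReal_lt_one.2 hθ)).ne') ENNReal.ofReal_ne_top,
    fun h hh v hv => le_of_tendsto' (tendsto_hardySq_clampAbs s h hv) fun n => ?_⟩
  have hfin : hardySq s h (clampAbs n ∘ v) ≠ ⊤ :=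
    hardySq_ne_top_of_abs_le hs2 fun x => (abs_clampAbs n (v x)).trans_le (min_le_right _ _)
  have hmeas : Measurable (clampAbs n ∘ v) :=
    (lipschitzWith_clampAbs n).continuous.measurable.comp hv
  refine (hardySq_le_of_ne_top hs0 (sub_pos.2 hκ) hθ hh hmeas hfin).trans ?_
  rw [mul_assoc]
  gcongr
  exact scaledHsSq_clampAbs_le s 0 h n v

/-! ### Interaction of an interval with its complement -/

/-- The cross term `∫_(a,b) ∫_(a,b)ᶜ v(x)² |x-y|^(-1-2s)`: half of what the extension of `v|_(a,b)`
by zero adds to the squared seminorm. Together with `HsSq` it gives the squared norm of `H̃^s`. -/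
noncomputable def extSlobSq (s a b : ℝ) (v : ℝ → ℝ) : ENNReal :=
  ∫⁻ p in Ioo a b ×ˢ (Ioo a b)ᶜ, ENNReal.ofReal (v p.1 ^ 2 / |p.1 - p.2| ^ (1 + 2 * s))

lemma lintegral_compl_Ioo_abs_sub_rpow_le {s a b x : ℝ} (hs : 0 < s) (hx : x ∈ Ioo a b) :
    ∫⁻ y in (Ioo a b)ᶜ, ENNReal.ofReal (|x - y| ^ (-(1 + 2 * s))) ≤
      ENNReal.ofReal (1 / (2 * s)) *
        (ENNReal.ofReal ((x - a) ^ (-(2 * s))) + ENNReal.ofReal ((b - x) ^ (-(2 * s)))) := by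
  have hcompl : (Ioo a b)ᶜ = Iic a ∪ Ici b := by
    rw [← Ioi_inter_Iio, compl_inter, compl_Ioi, compl_Iio]
  rw [hcompl, mul_add, ← lintegral_Iic_abs_sub_rpow hs hx.1, ← lintegral_Ici_abs_sub_rpow hs hx.2]
  exact lintegral_union_le _ _ _

lemma hardySq_comp_const_add (s a b : ℝ) (v : ℝ → ℝ) :
    hardySq s (b - a) (v ∘ (a + ·)) =
      ∫⁻ x in Ioo a b, ENNReal.ofReal (v x ^ 2) * ENNReal.ofReal ((x - a) ^ (-(2 * s))) := by
  rw [← (measurePreserving_add_left volume a).setLIntegral_comp_preimage_emb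
    (measurableEmbedding_addLeft a), preimage_const_add_Ioo, sub_self, hardySq]
  simp only [Function.comp_apply, add_sub_cancel_left]

lemma hardySq_comp_const_sub (s a b : ℝ) (v : ℝ → ℝ) :
    hardySq s (b - a) (v ∘ (b - ·)) =
      ∫⁻ x in Ioo a b, ENNReal.ofReal (v x ^ 2) * ENNReal.ofReal ((b - x) ^ (-(2 * s))) := by
  rw [← (Measure.measurePreserving_sub_left volume b).setLIntegral_comp_preimage_emb
    (Homeomorph.subLeft b).measurableEmbedding, preimage_const_sub_Ioo, sub_self, hardySq]
  simp only [Function.comp_apply, sub_sub_cancel]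

lemma extSlobSq_le_hardySq {s a b : ℝ} {v : ℝ → ℝ} (hs : 0 < s) (hv : Measurable v) :
    extSlobSq s a b v ≤ ENNReal.ofReal (1 / (2 * s)) *
      (hardySq s (b - a) (v ∘ (a + ·)) + hardySq s (b - a) (v ∘ (b - ·))) := by
  calc extSlobSq s a b v
      = ∫⁻ x in Ioo a b, ENNReal.ofReal (v x ^ 2) *
          ∫⁻ y in (Ioo a b)ᶜ, ENNReal.ofReal (|x - y| ^ (-(1 + 2 * s))) := by
        rw [extSlobSq, Measure.volume_eq_prod, setLIntegral_prod _ (by fun_prop)]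
        simp only [← lintegral_const_mul' _ _ ENNReal.ofReal_ne_top,
          ← ENNReal.ofReal_mul (sq_nonneg _), Real.rpow_neg (abs_nonneg _), div_eq_mul_inv]
    _ ≤ ∫⁻ x in Ioo a b, ENNReal.ofReal (v x ^ 2) * (ENNReal.ofReal (1 / (2 * s)) *
          (ENNReal.ofReal ((x - a) ^ (-(2 * s))) + ENNReal.ofReal ((b - x) ^ (-(2 * s))))) := by
        refine setLIntegral_mono' measurableSet_Ioo fun x hx => ?_
        gcongr
        exact lintegral_compl_Ioo_abs_sub_rpow_le hs hx
    _ = _ := by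
        rw [hardySq_comp_const_add, hardySq_comp_const_sub, ← lintegral_add_right _ (by fun_prop),
          ← lintegral_const_mul' _ _ ENNReal.ofReal_ne_top]
        simp only [mul_add, mul_left_comm]

lemma scaledHsSq_comp {s a b c d : ℝ} {φ : ℝ → ℝ} (hφ : MeasurePreserving φ) (hiso : Isometry φ)
    (hpre : φ ⁻¹' Ioo c d = Ioo a b) (hlen : b - a = d - c) (v : ℝ → ℝ) :
    scaledHsSq s a b (v ∘ φ) = scaledHsSq s c d v := by
  rw [scaledHsSq, scaledHsSq, hlen, l2sq_comp hφ hiso hpre, slobSq_comp hφ hiso hpre]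

theorem exists_extSlobSq_le {s : ℝ} (hs0 : 0 < s) (hs2 : s < 1 / 2) :
    ∃ K : ENNReal, K ≠ ⊤ ∧ ∀ a b : ℝ, a < b → ∀ v : ℝ → ℝ, Measurable v →
      extSlobSq s a b v ≤ K * scaledHsSq s a b v := by
  obtain ⟨K, hK, hardy⟩ := exists_hardySq_le hs0 hs2
  refine ⟨ENNReal.ofReal (1 / (2 * s)) * (2 * K), by finiteness, fun a b hab v hv => ?_⟩
  have hleft : hardySq s (b - a) (v ∘ (a + ·)) ≤ K * scaledHsSq s a b v := by
    refine (hardy (b - a) (sub_pos.2 hab) _ (by fun_prop)).trans_eq ?_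
    rw [scaledHsSq_comp (measurePreserving_add_left volume a) (IsometryEquiv.addLeft a).isometry
      (by rw [preimage_const_add_Ioo, sub_self]) (sub_zero _)]
  have hright : hardySq s (b - a) (v ∘ (b - ·)) ≤ K * scaledHsSq s a b v := by
    refine (hardy (b - a) (sub_pos.2 hab) _ (by fun_prop)).trans_eq ?_
    rw [scaledHsSq_comp (Measure.measurePreserving_sub_left volume b)
      (IsometryEquiv.subLeft b).isometry
      (by rw [preimage_const_sub_Ioo, sub_self]) (sub_zero _)]
  calc extSlobSq s a b v
      ≤ ENNReal.ofReal (1 / (2 * s)) * (K * scaledHsSq s a b v + K * scaledHsSq s a b v) :=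
        (extSlobSq_le_hardySq hs0 hv).trans (by gcongr)
    _ = ENNReal.ofReal (1 / (2 * s)) * (2 * K) * scaledHsSq s a b v := by ring

/-! ### Partitions -/

lemma setLIntegral_comp_swap {α : Type*} [MeasurableSpace α] {μ : Measure α} [SFinite μ]
    {J : Set (α × α)} (hJ : Prod.swap ⁻¹' J = J) (f : α × α → ENNReal) :
    ∫⁻ p in J, f p.swap ∂μ.prod μ = ∫⁻ p in J, f p ∂μ.prod μ := by
  conv_lhs => rw [← hJ]
  exact Measure.measurePreserving_swap.setLIntegral_comp_preimage_emb
    MeasurableEquiv.prodComm.measurableEmbedding f J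

lemma setLIntegral_iUnion_prod_self_le {α ι : Type*} [MeasurableSpace α] [Countable ι]
    {μ : Measure α} [SFinite μ] (T : ι → Set α) {G H : α × α → ENNReal} (hH : Measurable H)
    (hGH : ∀ p, G p ≤ H p + H p.swap) :
    ∫⁻ p in (⋃ i, T i) ×ˢ (⋃ i, T i), G p ∂μ.prod μ ≤
      ∑' i, ∫⁻ p in T i ×ˢ T i, G p ∂μ.prod μ +
        2 * ∑' i, ∫⁻ p in T i ×ˢ (T i)ᶜ, H p ∂μ.prod μ := by
  set E := ⋃ i, T i
  set D := ⋃ i, T i ×ˢ T i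
  have hswap : Prod.swap ⁻¹' (E ×ˢ E \ D) = E ×ˢ E \ D := by
    simp only [D, preimage_sdiff, preimage_iUnion, preimage_swap_prod]
  have hoff : E ×ˢ E \ D ⊆ ⋃ i, T i ×ˢ (T i)ᶜ := by
    rintro p ⟨⟨hp, -⟩, hpD⟩
    obtain ⟨i, hi⟩ := mem_iUnion.1 hp
    exact mem_iUnion.2 ⟨i, hi, fun h => hpD (mem_iUnion.2 ⟨i, hi, h⟩)⟩
  calc ∫⁻ p in E ×ˢ E, G p ∂μ.prod μ
      ≤ ∫⁻ p in D, G p ∂μ.prod μ + ∫⁻ p in E ×ˢ E \ D, G p ∂μ.prod μ := by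
        refine (lintegral_mono_set ?_).trans (lintegral_union_le _ _ _)
        rw [union_sdiff_self]
        exact subset_union_right
    _ ≤ ∫⁻ p in D, G p ∂μ.prod μ + ∫⁻ p in E ×ˢ E \ D, (H p + H p.swap) ∂μ.prod μ := by
        gcongr
        exact hGH _
    _ = ∫⁻ p in D, G p ∂μ.prod μ + 2 * ∫⁻ p in E ×ˢ E \ D, H p ∂μ.prod μ := by
        rw [lintegral_add_left hH, setLIntegral_comp_swap hswap, two_mul]
    _ ≤ _ := by
        gcongr
        · exact lintegral_iUnion_le _ _
        · exact (lintegral_mono_set hoff).trans (lintegral_iUnion_le _ _)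

lemma sq_sub_div_le (r a b d : ℝ) :
    ENNReal.ofReal ((a - b) ^ 2 / |d| ^ r) ≤
      2 * ENNReal.ofReal (a ^ 2 / |d| ^ r) + 2 * ENNReal.ofReal (b ^ 2 / |d| ^ r) := by
  rw [← ENNReal.ofReal_ofNat, ← ENNReal.ofReal_mul zero_le_two, ← ENNReal.ofReal_mul zero_le_two,
    ← ENNReal.ofReal_add (by positivity) (by positivity)]
  apply ENNReal.ofReal_le_ofReal
  rw [← mul_div_assoc, ← mul_div_assoc, ← add_div]
  gcongr
  linarith [sq_nonneg (a + b)]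

lemma Ioo_ae_le_iUnion_Ioo (N : ℕ) (x : ℕ → ℝ) :
    Ioo (x 0) (x N) ≤ᵐ[volume] ⋃ i : Fin N, Ioo (x i) (x (i + 1)) := by
  have hcover : Ioo (x 0) (x N) ⊆ ⋃ i : Fin N, Ioc (x i) (x (i + 1)) := by
    refine Ioo_subset_Ioc_self.trans ((Ioc_subset_biUnion_Ioc N x).trans ?_)
    exact iUnion₂_subset fun i hi =>
      subset_iUnion_of_subset ⟨i, Finset.mem_range.1 hi⟩ subset_rfl
  exact hcover.eventuallyLE.trans_eq
    (Filter.EventuallyEq.countable_iUnion fun _ => Ioo_ae_eq_Ioc.symm)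

lemma l2sq_le_sum (N : ℕ) (x : ℕ → ℝ) (v : ℝ → ℝ) :
    L2sq (x 0) (x N) v ≤ ∑ i ∈ Finset.range N, L2sq (x i) (x (i + 1)) v := by
  rw [Finset.sum_range]
  exact (lintegral_mono_set' (Ioo_ae_le_iUnion_Ioo N x)).trans
    ((lintegral_iUnion_le _ _).trans_eq (tsum_fintype _))

lemma slobSq_le_sum (s : ℝ) (N : ℕ) (x : ℕ → ℝ) {v : ℝ → ℝ} (hv : Measurable v) :
    SlobSq s (x 0) (x N) v ≤
      ∑ i ∈ Finset.range N, SlobSq s (x i) (x (i + 1)) v +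
        4 * ∑ i ∈ Finset.range N, extSlobSq s (x i) (x (i + 1)) v := by
  have hcover := Ioo_ae_le_iUnion_Ioo N x
  have hcover_prod : Ioo (x 0) (x N) ×ˢ Ioo (x 0) (x N) ≤ᵐ[volume.prod volume]
      (⋃ i : Fin N, Ioo (x i) (x (i + 1))) ×ˢ ⋃ i : Fin N, Ioo (x i) (x (i + 1)) := by
    filter_upwards [Measure.quasiMeasurePreserving_fst.ae hcover,
      Measure.quasiMeasurePreserving_snd.ae hcover] with p hfst hsnd hp
    exact ⟨hfst hp.1, hsnd hp.2⟩
  refine (lintegral_mono_set' hcover_prod).trans ((setLIntegral_iUnion_prod_self_le _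
    (H := fun p => 2 * ENNReal.ofReal (v p.1 ^ 2 / |p.1 - p.2| ^ (1 + 2 * s)))
    (by fun_prop) fun p => ?_).trans_eq ?_)
  · rw [Prod.fst_swap, Prod.snd_swap, abs_sub_comm p.2]
    exact sq_sub_div_le _ _ _ _
  · simp only [lintegral_const_mul' _ _ ENNReal.ofNat_ne_top, ENNReal.tsum_mul_left,
      Finset.sum_range, ← tsum_fintype (L := .unconditional _), SlobSq, extSlobSq,
      Measure.volume_eq_prod, ← mul_assoc]
    norm_num

lemma scaledHsSq_le_of_le_sub {s η a b : ℝ} (hs : 0 ≤ s) (hη : 0 < η) (hab : η ≤ b - a)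
    (v : ℝ → ℝ) :
    scaledHsSq s a b v ≤ ENNReal.ofReal (max 1 (η ^ (-(2 * s)))) * HsSq s a b v := by
  rw [scaledHsSq, HsSq, mul_add]
  gcongr
  · exact (Real.rpow_le_rpow_of_nonpos hη hab (by linarith)).trans (le_max_right _ _)
  · exact le_mul_of_one_le_left' (ENNReal.one_le_ofReal.2 (le_max_left _ _))

theorem exists_hsSq_le_mul_sum {s : ℝ} (hs0 : 0 < s) (hs2 : s < 1 / 2) :
    ∃ K : ENNReal, K ≠ ⊤ ∧ ∀ (N : ℕ) (x : ℕ → ℝ) (η : ℝ), 0 < η →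
      (∀ i < N, η ≤ x (i + 1) - x i) → ∀ v : ℝ → ℝ, Measurable v →
      HsSq s (x 0) (x N) v ≤ K * ENNReal.ofReal (max 1 (η ^ (-(2 * s)))) *
        ∑ i ∈ Finset.range N, HsSq s (x i) (x (i + 1)) v := by
  obtain ⟨K, hK, hext⟩ := exists_extSlobSq_le hs0 hs2
  refine ⟨1 + 4 * K, by finiteness, fun N x η hη hmesh v hv => ?_⟩
  set M := ENNReal.ofReal (max 1 (η ^ (-(2 * s))))
  set S := ∑ i ∈ Finset.range N, HsSq s (x i) (x (i + 1)) v
  have hM : 1 ≤ M := ENNReal.one_le_ofReal.2 (le_max_left _ _)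
  have hcross : ∑ i ∈ Finset.range N, extSlobSq s (x i) (x (i + 1)) v ≤ K * M * S := by
    rw [Finset.mul_sum]
    refine Finset.sum_le_sum fun i hi => ?_
    have hi := hmesh i (Finset.mem_range.1 hi)
    calc extSlobSq s (x i) (x (i + 1)) v
        ≤ K * scaledHsSq s (x i) (x (i + 1)) v := hext _ _ (sub_pos.1 (hη.trans_le hi)) v hv
      _ ≤ K * (M * HsSq s (x i) (x (i + 1)) v) := by
          gcongr
          exact scaledHsSq_le_of_le_sub hs0.le hη hi v
      _ = K * M * HsSq s (x i) (x (i + 1)) v := (mul_assoc _ _ _).symm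
  calc HsSq s (x 0) (x N) v
      ≤ ∑ i ∈ Finset.range N, L2sq (x i) (x (i + 1)) v +
          (∑ i ∈ Finset.range N, SlobSq s (x i) (x (i + 1)) v +
            4 * ∑ i ∈ Finset.range N, extSlobSq s (x i) (x (i + 1)) v) :=
        add_le_add (l2sq_le_sum N x v) (slobSq_le_sum s N x hv)
    _ = S + 4 * ∑ i ∈ Finset.range N, extSlobSq s (x i) (x (i + 1)) v := by
        rw [← add_assoc, ← Finset.sum_add_distrib]
        rfl
    _ ≤ M * S + 4 * (K * M * S) := by
        gcongr
        exact le_mul_of_one_le_left' hM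
    _ = (1 + 4 * K) * M * S := by ring

lemma max_one_rpow_neg_le {r c n : ℝ} (hr : 0 ≤ r) (hc : 0 ≤ c) (hn : 1 ≤ n) :
    max 1 ((1 / (c * n)) ^ (-r)) ≤ max 1 c ^ r * n ^ r := by
  rw [Real.rpow_neg (by positivity), ← Real.inv_rpow (by positivity), one_div, inv_inv,
    ← Real.mul_rpow (by positivity) (by positivity)]
  refine max_le (Real.one_le_rpow (one_le_mul_of_one_le_of_one_le (le_max_left _ _) hn) hr) ?_
  gcongr
  exact le_max_right _ _

theorem broken_norm_bound_general (s : ℝ) (hs0 : 0 < s) (hs2 : s < 1 / 2)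
    (cq : ℝ) (hcq : 0 < cq) :
    ∃ C : ℝ, 0 < C ∧
      ∀ (N : ℕ), 0 < N → ∀ x : ℕ → ℝ,
      (∀ i < N, 1 / (cq * N) ≤ x (i + 1) - x i) →
      ∀ v : ℝ → ℝ, Measurable v →
      HsSq s (x 0) (x N) v
        ≤ ENNReal.ofReal (C ^ 2 * (N : ℝ) ^ (2 * s)) *
            ∑ i ∈ Finset.range N, HsSq s (x i) (x (i + 1)) v := by
  obtain ⟨K, hK, hbound⟩ := exists_hsSq_le_mul_sum hs0 hs2
  set B : ℝ := (K.toReal + 1) * max 1 cq ^ (2 * s)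
  have hB : 0 < B := by positivity
  refine ⟨√B, Real.sqrt_pos.2 hB, fun N hN x hmesh v hv => ?_⟩
  have hK' : K ≤ ENNReal.ofReal (K.toReal + 1) :=
    (ENNReal.ofReal_toReal hK).ge.trans (ENNReal.ofReal_le_ofReal (by linarith))
  have hN1 : (1 : ℝ) ≤ N := Nat.one_le_cast.2 hN
  calc HsSq s (x 0) (x N) v
      ≤ K * ENNReal.ofReal (max 1 ((1 / (cq * N)) ^ (-(2 * s)))) *
          ∑ i ∈ Finset.range N, HsSq s (x i) (x (i + 1)) v :=
        hbound N x _ (by positivity) hmesh v hv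
    _ ≤ ENNReal.ofReal (K.toReal + 1) * ENNReal.ofReal (max 1 cq ^ (2 * s) * N ^ (2 * s)) *
          ∑ i ∈ Finset.range N, HsSq s (x i) (x (i + 1)) v := by
        gcongr
        exact max_one_rpow_neg_le (by linarith) hcq.le hN1
    _ = _ := by rw [Real.sq_sqrt hB.le, ← ENNReal.ofReal_mul (by positivity), mul_assoc]

/-- for `s ∈ (0,1/2)` and a quasi-uniform partition of `(0,1)` into `N`
intervals, `‖v‖²_{H^s(0,1)} ≤ C² N^{2s} ∑_T ‖v‖²_{H^s(T)}`, with `C` depending only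
on `s` and the quasi-uniformity constant. -/
theorem broken_norm_bound (s : ℝ) (hs0 : 0 < s) (hs2 : s < 1 / 2)
    (cq : ℝ) (hcq : 1 ≤ cq) :
    ∃ C : ℝ, 0 < C ∧
      ∀ (N : ℕ), 0 < N → ∀ x : ℕ → ℝ, x 0 = 0 → x N = 1 →
      (∀ i < N, 1 / (cq * N) ≤ x (i + 1) - x i ∧ x (i + 1) - x i ≤ cq / N) →
      ∀ v : ℝ → ℝ, Measurable v →
      HsSq s 0 1 v
        ≤ ENNReal.ofReal (C ^ 2 * (N : ℝ) ^ (2 * s)) *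
            ∑ i ∈ Finset.range N, HsSq s (x i) (x (i + 1)) v := by
  obtain ⟨C, hC, h⟩ := broken_norm_bound_general s hs0 hs2 cq (zero_lt_one.trans_le hcq)
  exact ⟨C, hC, fun N hN x hx0 hxN hx v hv => by
    simpa only [hx0, hxN] using h N hN x (fun i hi => (hx i hi).1) v hv⟩
end

section
/- Let s ∈ (1/2, 1) and 𝒯 a quasi-uniform partition of I=(0,1) into N intervals of length ≃ 1/N. Then for all piecewise H^s functions v on 𝒯, the piecewise distributional derivative satisfies ‖D_𝒯 v‖_{H̃^{s-1}(I)} ≤ C N^{1-s} (∑_{T∈𝒯} |v|²_{H^s(T)})^{1/2}, where H̃^{s-1}(I) is the dual of H^{1-s}(I) and |·|_{H^s(T)} the Sobolev–Slobodeckij seminorm, with C depending only on s and the quasi-uniformity constant. -/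
open MeasureTheory Set

/-- `H^σ(0,1)` norm (Sobolev–Slobodeckij). -/
noncomputable def HsNorm (σ : ℝ) (f : ℝ → ℝ) : ℝ :=
  Real.sqrt ((L2sq 0 1 f + SlobSq σ 0 1 f).toReal)

/-!
On an element `T` the pairing of `D_𝒯 v` with `w` only sees differences of `v`. Bisect `T`
repeatedly: replacing `w` by its mean on each dyadic interval, the change from one scale to the
next is the difference of the means of `w` on two adjacent halves times a second difference of `v`.
The former is controlled by the `H^{1-s}` energy of `w` between the halves and the latter, by a
Morrey inequality, by the `H^s` energy of `v`. Working with an exponent between the critical one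
and that of `H^s` in the Morrey inequality leaves a geometric gain, so Cauchy–Schwarz over all
scales is summable. The mean of `w` over the whole of `T` remains; it is paired with the increment
of `v` across `T`, and this term alone costs the factor `|T| ^ (s - 1)`.
-/

open scoped Interval Topology

section Energy

/-- The Sobolev–Slobodeckij difference quotient `(f x - f y)² / |x - y| ^ θ`. The order `s`
corresponds to `θ = 1 + 2 * s`; on the diagonal the value is `0`, for every `θ`. -/
noncomputable def slobKernel (θ : ℝ) (f : ℝ → ℝ) (p : ℝ × ℝ) : ℝ :=
  (f p.1 - f p.2) ^ 2 / |p.1 - p.2| ^ θ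

/-- The interaction energy of `f` between `S` and `T`; for `S = T` an interval and
`θ = 1 + 2 * s`, it is the squared Sobolev–Slobodeckij seminorm of order `s`. As a Bochner
integral it is `0` when the kernel is not integrable on `S ×ˢ T`. -/
noncomputable def slobEnergy (θ : ℝ) (f : ℝ → ℝ) (S T : Set ℝ) : ℝ :=
  ∫ p in S ×ˢ T, slobKernel θ f p

variable {θ θ' : ℝ} {f : ℝ → ℝ} {S T U : Set ℝ}

lemma slobKernel_nonneg (θ : ℝ) (f : ℝ → ℝ) (p : ℝ × ℝ) : 0 ≤ slobKernel θ f p := by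
  unfold slobKernel
  positivity

lemma slobKernel_le_rpow_mul {h : ℝ} (hθ : θ' ≤ θ) {p : ℝ × ℝ} (hp : |p.1 - p.2| ≤ h) :
    slobKernel θ' f p ≤ h ^ (θ - θ') * slobKernel θ f p := by
  obtain hdiag | hdiag := eq_or_ne p.1 p.2
  · simp [slobKernel, hdiag]
  have hpos : 0 < |p.1 - p.2| := abs_pos.2 (sub_ne_zero.2 hdiag)
  calc slobKernel θ' f p
      = |p.1 - p.2| ^ (θ - θ') * slobKernel θ f p := by
        rw [slobKernel, slobKernel, Real.rpow_sub hpos]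
        field_simp
    _ ≤ h ^ (θ - θ') * slobKernel θ f p :=
        mul_le_mul_of_nonneg_right (Real.rpow_le_rpow hpos.le hp (sub_nonneg.2 hθ))
          (slobKernel_nonneg θ f p)

lemma aestronglyMeasurable_slobKernel (θ : ℝ)
    (hf : AEStronglyMeasurable f (volume.restrict U)) :
    AEStronglyMeasurable (slobKernel θ f) (volume.restrict (U ×ˢ U)) := by
  rw [Measure.volume_eq_prod, ← Measure.prod_restrict]
  have hdist : Measurable fun p : ℝ × ℝ => |p.1 - p.2| ^ θ := by fun_prop
  exact (((hf.comp_fst.sub hf.comp_snd).pow 2).aemeasurable.div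
    hdist.aemeasurable).aestronglyMeasurable

lemma slobKernel_ae_le_diam_rpow_mul (hθ : θ' ≤ θ) (hU : Bornology.IsBounded U)
    (hS : MeasurableSet S) (hT : MeasurableSet T) (hSU : S ⊆ U) (hTU : T ⊆ U) :
    ∀ᵐ p ∂volume.restrict (S ×ˢ T),
      slobKernel θ' f p ≤ Metric.diam U ^ (θ - θ') * slobKernel θ f p :=
  ae_restrict_of_forall_mem (hS.prod hT) fun _ hp =>
    slobKernel_le_rpow_mul hθ (Metric.dist_le_diam_of_mem hU (hSU hp.1) (hTU hp.2))

lemma integrableOn_slobKernel_of_le (hθ : θ' ≤ θ) (hU : Bornology.IsBounded U)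
    (hUm : MeasurableSet U) (hf : AEStronglyMeasurable f (volume.restrict U))
    (hE : IntegrableOn (slobKernel θ f) (U ×ˢ U)) :
    IntegrableOn (slobKernel θ' f) (U ×ˢ U) := by
  refine (hE.const_mul (Metric.diam U ^ (θ - θ'))).mono' (aestronglyMeasurable_slobKernel θ' hf) ?_
  simpa only [Real.norm_of_nonneg (slobKernel_nonneg _ _ _)] using
    slobKernel_ae_le_diam_rpow_mul hθ hU hUm hUm subset_rfl subset_rfl

lemma slobEnergy_nonneg (θ : ℝ) (f : ℝ → ℝ) (S T : Set ℝ) : 0 ≤ slobEnergy θ f S T :=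
  integral_nonneg (slobKernel_nonneg θ f)

lemma slobEnergy_comm (θ : ℝ) (f : ℝ → ℝ) (S T : Set ℝ) :
    slobEnergy θ f S T = slobEnergy θ f T S := by
  have hswap : ∀ p : ℝ × ℝ, slobKernel θ f p.swap = slobKernel θ f p := fun p => by
    rw [slobKernel, slobKernel, Prod.fst_swap, Prod.snd_swap, abs_sub_comm, sub_sq_comm]
  rw [slobEnergy, slobEnergy, Measure.volume_eq_prod, ← setIntegral_prod_swap]
  simp only [hswap]

lemma slobEnergy_mono (hE : IntegrableOn (slobKernel θ f) (U ×ˢ U)) (hSU : S ⊆ U)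
    (hTU : T ⊆ U) : slobEnergy θ f S T ≤ slobEnergy θ f U U :=
  setIntegral_mono_set hE (.of_forall (slobKernel_nonneg θ f)) (prod_mono hSU hTU).eventuallyLE

lemma slobEnergy_le_diam_rpow_mul (hθ : θ' ≤ θ) (hU : Bornology.IsBounded U)
    (hS : MeasurableSet S) (hT : MeasurableSet T) (hSU : S ⊆ U) (hTU : T ⊆ U)
    (hE : IntegrableOn (slobKernel θ f) (U ×ˢ U)) :
    slobEnergy θ' f S T ≤ Metric.diam U ^ (θ - θ') * slobEnergy θ f S T := by
  rw [slobEnergy, slobEnergy, ← integral_const_mul]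
  exact integral_mono_of_nonneg (.of_forall (slobKernel_nonneg θ' f))
    ((hE.mono_set (prod_mono hSU hTU)).const_mul _)
    (slobKernel_ae_le_diam_rpow_mul hθ hU hS hT hSU hTU)

lemma slobEnergy_union (hS : MeasurableSet S) (hT : MeasurableSet T) (hST : Disjoint S T)
    (hE : IntegrableOn (slobKernel θ f) ((S ∪ T) ×ˢ (S ∪ T))) :
    slobEnergy θ f (S ∪ T) (S ∪ T) =
      slobEnergy θ f S S + 2 * slobEnergy θ f S T + slobEnergy θ f T T := by
  have hsplit {V : Set ℝ} (hV : MeasurableSet V) (hVU : V ⊆ S ∪ T) :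
      slobEnergy θ f (S ∪ T) V = slobEnergy θ f S V + slobEnergy θ f T V := by
    unfold slobEnergy
    rw [union_prod, setIntegral_union (hST.set_prod_left V V) (hT.prod hV)
      (hE.mono_set (prod_mono subset_union_left hVU))
      (hE.mono_set (prod_mono subset_union_right hVU))]
  rw [hsplit (hS.union hT) subset_rfl, slobEnergy_comm θ f S, slobEnergy_comm θ f T,
    hsplit hS subset_union_left, hsplit hT subset_union_right, slobEnergy_comm θ f T S]
  ring

lemma sum_slobEnergy_le {ι : Type*} (t : Finset ι) {S : ι → Set ℝ}
    (hS : ∀ i ∈ t, MeasurableSet (S i)) (hdisj : (t : Set ι).PairwiseDisjoint S)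
    (hSU : ∀ i ∈ t, S i ⊆ U) (hE : IntegrableOn (slobKernel θ f) (U ×ˢ U)) :
    ∑ i ∈ t, slobEnergy θ f (S i) (S i) ≤ slobEnergy θ f U U := by
  have hsub : ∀ i ∈ t, S i ×ˢ S i ⊆ U ×ˢ U := fun i hi => prod_mono (hSU i hi) (hSU i hi)
  unfold slobEnergy
  rw [← integral_biUnion_finset t (fun i hi => (hS i hi).prod (hS i hi))
    (fun i hi j hj hij => (hdisj hi hj hij).set_prod_left _ _) fun i hi => hE.mono_set (hsub i hi)]
  exact setIntegral_mono_set hE (.of_forall (slobKernel_nonneg θ f))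
    (iUnion₂_subset hsub).eventuallyLE

lemma SlobSq_eq_lintegral_slobKernel (s a b : ℝ) (f : ℝ → ℝ) :
    SlobSq s a b f =
      ∫⁻ p in Ioc a b ×ˢ Ioc a b, ENNReal.ofReal (slobKernel (1 + 2 * s) f p) := by
  unfold SlobSq slobKernel
  rw [Measure.volume_eq_prod, ← Measure.prod_restrict, ← Measure.prod_restrict,
    restrict_Ioo_eq_restrict_Ioc]

lemma integrableOn_slobKernel_of_SlobSq_lt_top {s a b : ℝ}
    (hf : AEStronglyMeasurable f (volume.restrict (Ioc a b))) (h : SlobSq s a b f < ⊤) :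
    IntegrableOn (slobKernel (1 + 2 * s) f) (Ioc a b ×ˢ Ioc a b) := by
  refine ⟨aestronglyMeasurable_slobKernel _ hf, ?_⟩
  rwa [hasFiniteIntegral_iff_ofReal (.of_forall (slobKernel_nonneg _ f)),
    ← SlobSq_eq_lintegral_slobKernel]

lemma toReal_SlobSq {s a b : ℝ} (hf : AEStronglyMeasurable f (volume.restrict (Ioc a b))) :
    (SlobSq s a b f).toReal = slobEnergy (1 + 2 * s) f (Ioc a b) (Ioc a b) := by
  rw [SlobSq_eq_lintegral_slobKernel, slobEnergy, integral_eq_lintegral_of_nonneg_ae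
    (.of_forall (slobKernel_nonneg _ f)) (aestronglyMeasurable_slobKernel _ hf)]

end Energy

section Average

variable {α : Type*} [MeasurableSpace α] {μ : Measure α} {f : α → ℝ} {S T : Set α}

lemma sq_setAverage_mul_measureReal_le (hμS : μ S ≠ ⊤) (hf : IntegrableOn f S μ)
    (hf2 : IntegrableOn (fun x => f x ^ 2) S μ) :
    (⨍ x in S, f x ∂μ) ^ 2 * μ.real S ≤ ∫ x in S, f x ^ 2 ∂μ := by
  obtain hS | hS := eq_or_ne (μ S) 0
  · rw [Measure.real, hS, ENNReal.toReal_zero, mul_zero]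
    exact integral_nonneg fun x => sq_nonneg (f x)
  have hjensen : (⨍ x in S, f x ∂μ) ^ 2 ≤ ⨍ x in S, f x ^ 2 ∂μ :=
    even_two.convexOn_pow.map_set_average_le (continuous_pow 2).continuousOn isClosed_univ hS hμS
      (.of_forall fun _ => mem_univ _) hf hf2
  have hpos : 0 < μ.real S := ENNReal.toReal_pos hS hμS
  rwa [setAverage_eq μ (fun x => f x ^ 2), smul_eq_mul, ← div_eq_inv_mul,
    le_div_iff₀ hpos] at hjensen

lemma setAverage_prod_sub [SFinite μ] (hS : μ S ≠ 0) (hT : μ T ≠ 0) (hS' : μ S ≠ ⊤)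
    (hT' : μ T ≠ ⊤) (hfS : IntegrableOn f S μ) (hfT : IntegrableOn f T μ) :
    ⨍ p in S ×ˢ T, (f p.1 - f p.2) ∂μ.prod μ = (⨍ x in S, f x ∂μ) - ⨍ x in T, f x ∂μ := by
  have : IsFiniteMeasure (μ.restrict S) := ⟨by simpa [lt_top_iff_ne_top]⟩
  have : IsFiniteMeasure (μ.restrict T) := ⟨by simpa [lt_top_iff_ne_top]⟩
  have hS0 : μ.real S ≠ 0 := (ENNReal.toReal_pos hS hS').ne'
  have hT0 : μ.real T ≠ 0 := (ENNReal.toReal_pos hT hT').ne'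
  rw [setAverage_eq, setAverage_eq, setAverage_eq, measureReal_prod_prod, ← Measure.prod_restrict,
    integral_sub (hfS.comp_fst _) (hfT.comp_snd _), integral_fun_fst, integral_fun_snd]
  simp only [measureReal_restrict_apply_univ, smul_eq_mul]
  field_simp

lemma sq_setAverage_sub_setAverage_mul_le [SFinite μ] (hS : μ S ≠ ⊤) (hT : μ T ≠ ⊤)
    (hfS : IntegrableOn f S μ) (hfT : IntegrableOn f T μ)
    (hf2 : IntegrableOn (fun p : α × α => (f p.1 - f p.2) ^ 2) (S ×ˢ T) (μ.prod μ)) :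
    ((⨍ x in S, f x ∂μ) - ⨍ x in T, f x ∂μ) ^ 2 * (μ.real S * μ.real T) ≤
      ∫ p in S ×ˢ T, (f p.1 - f p.2) ^ 2 ∂μ.prod μ := by
  obtain hST | hST := eq_or_ne (μ.real S * μ.real T) 0
  · rw [hST, mul_zero]
    exact integral_nonneg fun p => sq_nonneg _
  have hS0 : μ S ≠ 0 := (ENNReal.toReal_ne_zero.1 (left_ne_zero_of_mul hST)).1
  have hT0 : μ T ≠ 0 := (ENNReal.toReal_ne_zero.1 (right_ne_zero_of_mul hST)).1
  have : IsFiniteMeasure (μ.restrict S) := ⟨by simpa [lt_top_iff_ne_top]⟩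
  have : IsFiniteMeasure (μ.restrict T) := ⟨by simpa [lt_top_iff_ne_top]⟩
  have hdiff : IntegrableOn (fun p : α × α => f p.1 - f p.2) (S ×ˢ T) (μ.prod μ) := by
    rw [IntegrableOn, ← Measure.prod_restrict]
    exact (hfS.comp_fst _).sub (hfT.comp_snd _)
  rw [← setAverage_prod_sub hS0 hT0 hS hT hfS hfT, ← measureReal_prod_prod]
  refine sq_setAverage_mul_measureReal_le ?_ hdiff hf2
  rw [Measure.prod_prod]
  exact ENNReal.mul_ne_top hS hT

end Average

section Morrey

variable {θ δ : ℝ} {f : ℝ → ℝ}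

lemma diam_uIoc (a b : ℝ) : Metric.diam (Ι a b) = |b - a| := by
  rw [uIoc, Real.diam_Ioc min_le_max, max_sub_min_eq_abs]

lemma isBounded_uIoc (a b : ℝ) : Bornology.IsBounded (Ι a b) := Metric.isBounded_Ioc _ _

lemma sq_setAverage_sub_setAverage_mul_le_slobEnergy {S T U : Set ℝ} (hθ : 0 ≤ θ)
    (hU : Bornology.IsBounded U) (hUm : MeasurableSet U) (hS : MeasurableSet S)
    (hT : MeasurableSet T) (hSU : S ⊆ U) (hTU : T ⊆ U) (hf : IntegrableOn f U)
    (hE : IntegrableOn (slobKernel θ f) (U ×ˢ U)) :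
    ((⨍ x in S, f x) - ⨍ x in T, f x) ^ 2 * (volume.real S * volume.real T) ≤
      Metric.diam U ^ θ * slobEnergy θ f S T := by
  have hzero : slobKernel 0 f = fun p => (f p.1 - f p.2) ^ 2 := by
    funext p
    rw [slobKernel, Real.rpow_zero, div_one]
  have hE0 : IntegrableOn (slobKernel 0 f) (S ×ˢ T) :=
    (integrableOn_slobKernel_of_le hθ hU hUm hf.aestronglyMeasurable hE).mono_set
      (prod_mono hSU hTU)
  calc ((⨍ x in S, f x) - ⨍ x in T, f x) ^ 2 * (volume.real S * volume.real T)
      ≤ slobEnergy 0 f S T := by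
        rw [hzero] at hE0
        rw [slobEnergy, hzero]
        exact sq_setAverage_sub_setAverage_mul_le (hU.subset hSU).measure_lt_top.ne
          (hU.subset hTU).measure_lt_top.ne (hf.mono_set hSU) (hf.mono_set hTU) hE0
    _ ≤ Metric.diam U ^ θ * slobEnergy θ f S T := by
        simpa only [sub_zero] using slobEnergy_le_diam_rpow_mul hθ hU hS hT hSU hTU hE

lemma add_mul_sub_mem_uIcc {r : ℝ} (hr : r ∈ Icc (0 : ℝ) 1) (p q : ℝ) :
    p + r * (q - p) ∈ [[p, q]] := by
  rw [← segment_eq_uIcc, segment_eq_image']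
  exact mem_image_of_mem _ hr

lemma add_div_two_mem_uIcc (p q : ℝ) : (p + q) / 2 ∈ [[p, q]] := by
  convert add_mul_sub_mem_uIcc (r := 1 / 2) (by norm_num) p q using 1
  ring

lemma sq_intervalAverage_sub_intervalAverage_half_le {p q : ℝ} (hδ : 0 < δ) (hpq : p ≠ q)
    (hf : IntegrableOn f (Ι p q)) (hE : IntegrableOn (slobKernel (2 + δ) f) (Ι p q ×ˢ Ι p q)) :
    ((⨍ x in p..q, f x) - ⨍ x in p..((p + q) / 2), f x) ^ 2 ≤
      2 * (|q - p| ^ δ * slobEnergy (2 + δ) f (Ι p q) (Ι p q)) := by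
  have hlen : 0 < |q - p| := abs_pos.2 (sub_ne_zero.2 hpq.symm)
  have hsub : Ι p ((p + q) / 2) ⊆ Ι p q :=
    uIoc_subset_uIoc_of_uIcc_subset_uIcc (uIcc_subset_uIcc_left (add_div_two_mem_uIcc p q))
  have hvol (r : ℝ) : volume.real (Ι p r) = |r - p| := by
    rw [Measure.real, Real.volume_uIoc, ENNReal.toReal_ofReal (abs_nonneg _)]
  have hhalf : |(p + q) / 2 - p| = |q - p| / 2 := by
    rw [show (p + q) / 2 - p = (q - p) / 2 by ring, abs_div, abs_two]
  have hmean := sq_setAverage_sub_setAverage_mul_le_slobEnergy (by positivity)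
    (isBounded_uIoc p q) measurableSet_uIoc measurableSet_uIoc measurableSet_uIoc subset_rfl
    hsub hf hE
  rw [hvol, hvol, hhalf, diam_uIoc, Real.rpow_add hlen, Real.rpow_two] at hmean
  refine le_of_mul_le_mul_right ?_ (show 0 < |q - p| * (|q - p| / 2) by positivity)
  calc ((⨍ x in p..q, f x) - ⨍ x in p..((p + q) / 2), f x) ^ 2 * (|q - p| * (|q - p| / 2))
      ≤ |q - p| ^ 2 * |q - p| ^ δ * slobEnergy (2 + δ) f (Ι p q) (Ι p ((p + q) / 2)) := hmean
    _ ≤ |q - p| ^ 2 * |q - p| ^ δ * slobEnergy (2 + δ) f (Ι p q) (Ι p q) := by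
        gcongr
        exact slobEnergy_mono hE subset_rfl hsub
    _ = 2 * (|q - p| ^ δ * slobEnergy (2 + δ) f (Ι p q) (Ι p q)) *
          (|q - p| * (|q - p| / 2)) := by ring

lemma tendsto_intervalAverage {p q : ℝ} {u : ℕ → ℝ} (hf : ContinuousOn f [[p, q]])
    (hu : Filter.Tendsto u Filter.atTop (𝓝 p)) (hup : ∀ n, u n ≠ p) (huq : ∀ n, u n ∈ [[p, q]]) :
    Filter.Tendsto (fun n => ⨍ x in p..(u n), f x) Filter.atTop (𝓝 (f p)) := by
  have hsub n : [[p, u n]] ⊆ [[p, q]] := uIcc_subset_uIcc_left (huq n)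
  choose c hc hfc using fun n => exists_eq_interval_average (hup n).symm (hf.mono (hsub n))
  have hcu n : c n ∈ [[p, u n]] := uIoo_subset_uIcc_self (hc n)
  have hcp : Filter.Tendsto c Filter.atTop (𝓝 p) := by
    rw [tendsto_iff_dist_tendsto_zero] at hu ⊢
    refine squeeze_zero (fun _ => dist_nonneg) (fun n => ?_) hu
    rw [dist_comm, dist_comm (u n)]
    exact Real.dist_left_le_of_mem_uIcc (hcu n)
  simp only [← hfc]
  exact (hf p left_mem_uIcc).tendsto.comp
    (tendsto_nhdsWithin_iff.2 ⟨hcp, .of_forall fun n => hsub n (hcu n)⟩)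

lemma dist_intervalAverage_pow_half_le {p q : ℝ} (hδ : 0 < δ) (hpq : p ≠ q)
    (hf : IntegrableOn f (Ι p q)) (hE : IntegrableOn (slobKernel (2 + δ) f) (Ι p q ×ˢ Ι p q))
    (n : ℕ) :
    dist (⨍ x in p..(p + (1 / 2) ^ n * (q - p)), f x)
        (⨍ x in p..(p + (1 / 2) ^ (n + 1) * (q - p)), f x) ≤
      √(2 * (|q - p| ^ δ * slobEnergy (2 + δ) f (Ι p q) (Ι p q))) * ((1 / 2) ^ (δ / 2)) ^ n := by
  set E := slobEnergy (2 + δ) f (Ι p q) (Ι p q)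
  set u := p + (1 / 2) ^ n * (q - p) with hu
  have hEnonneg : 0 ≤ E := slobEnergy_nonneg _ _ _ _
  have hne : p ≠ u := by simpa [hu, sub_eq_zero] using hpq.symm
  have hsub : Ι p u ⊆ Ι p q := uIoc_subset_uIoc_of_uIcc_subset_uIcc <| uIcc_subset_uIcc_left <|
    add_mul_sub_mem_uIcc ⟨by positivity, pow_le_one₀ (by norm_num) (by norm_num)⟩ p q
  have hlen : |u - p| = |q - p| * (1 / 2) ^ n := by
    rw [hu, add_sub_cancel_left, abs_mul, abs_of_pos (by positivity), mul_comm]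
  have hscale : |u - p| ^ δ = |q - p| ^ δ * (((1 / 2) ^ (δ / 2)) ^ n) ^ 2 := by
    rw [hlen, Real.mul_rpow (abs_nonneg _) (by positivity), ← Real.rpow_pow_comm (by norm_num),
      ← pow_mul, mul_comm n, pow_mul, ← Real.rpow_mul_natCast (by norm_num) (δ / 2) 2,
      Nat.cast_two, div_mul_cancel₀ δ two_ne_zero]
  rw [Real.dist_eq, show p + (1 / 2) ^ (n + 1) * (q - p) = (p + u) / 2 by rw [hu]; ring]
  refine abs_le_of_sq_le_sq ?_ (by positivity)
  calc ((⨍ x in p..u, f x) - ⨍ x in p..((p + u) / 2), f x) ^ 2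
      ≤ 2 * (|u - p| ^ δ * slobEnergy (2 + δ) f (Ι p u) (Ι p u)) :=
        sq_intervalAverage_sub_intervalAverage_half_le hδ hne (hf.mono_set hsub)
          (hE.mono_set (prod_mono hsub hsub))
    _ ≤ 2 * (|u - p| ^ δ * E) := by
        gcongr
        exact slobEnergy_mono hE hsub hsub
    _ = (√(2 * (|q - p| ^ δ * E)) * ((1 / 2) ^ (δ / 2)) ^ n) ^ 2 := by
        rw [mul_pow, Real.sq_sqrt (by positivity), hscale]
        ring

lemma abs_intervalAverage_sub_left_le {p q : ℝ} (hδ : 0 < δ) (hpq : p ≠ q)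
    (hf : ContinuousOn f [[p, q]])
    (hE : IntegrableOn (slobKernel (2 + δ) f) (Ι p q ×ˢ Ι p q)) :
    |(⨍ x in p..q, f x) - f p| ≤
      √(2 * (|q - p| ^ δ * slobEnergy (2 + δ) f (Ι p q) (Ι p q))) / (1 - (1 / 2) ^ (δ / 2)) := by
  have hmem (n : ℕ) : p + (1 / 2) ^ n * (q - p) ∈ [[p, q]] :=
    add_mul_sub_mem_uIcc ⟨by positivity, pow_le_one₀ (by norm_num) (by norm_num)⟩ p q
  have hne (n : ℕ) : p + (1 / 2) ^ n * (q - p) ≠ p := by simpa [sub_eq_zero] using hpq.symm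
  have hlim : Filter.Tendsto (fun n : ℕ => p + (1 / 2) ^ n * (q - p)) Filter.atTop (𝓝 p) := by
    simpa using ((tendsto_pow_atTop_nhds_zero_of_lt_one (r := (1 / 2 : ℝ)) (by norm_num)
      (by norm_num)).mul_const (q - p)).const_add p
  simpa [Real.dist_eq] using dist_le_of_le_geometric_of_tendsto₀ _ _
    (Real.rpow_lt_one (by norm_num) (by norm_num) (half_pos hδ))
    (dist_intervalAverage_pow_half_le hδ hpq (hf.integrableOn_uIcc.mono_set uIoc_subset_uIcc) hE)
    (tendsto_intervalAverage hf hlim hne hmem)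

/-- The constant of the Morrey-type inequality `sq_sub_le_morreyConst_mul`: the square of
`2 * √2` times the sum of the geometric series with ratio `(1 / 2) ^ (δ / 2)`. -/
noncomputable def morreyConst (δ : ℝ) : ℝ := 8 / (1 - (1 / 2) ^ (δ / 2)) ^ 2

lemma morreyConst_pos (hδ : 0 < δ) : 0 < morreyConst δ := by
  have hratio : (1 / 2 : ℝ) ^ (δ / 2) < 1 :=
    Real.rpow_lt_one (by norm_num) (by norm_num) (half_pos hδ)
  have := sub_pos.2 hratio
  unfold morreyConst
  positivity

lemma sq_sub_le_morreyConst_mul {a b : ℝ} (hδ : 0 < δ) (hab : a < b)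
    (hf : ContinuousOn f (Icc a b))
    (hE : IntegrableOn (slobKernel (2 + δ) f) (Ioc a b ×ˢ Ioc a b)) :
    (f b - f a) ^ 2 ≤
      morreyConst δ * ((b - a) ^ δ * slobEnergy (2 + δ) f (Ioc a b) (Ioc a b)) := by
  have hbase : 0 ≤ (b - a) ^ δ * slobEnergy (2 + δ) f (Ioc a b) (Ioc a b) :=
    mul_nonneg (Real.rpow_nonneg (sub_pos.2 hab).le δ) (slobEnergy_nonneg _ _ _ _)
  rw [← uIcc_of_le hab.le] at hf
  rw [← uIoc_of_le hab.le] at hE hbase ⊢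
  have hleft := abs_intervalAverage_sub_left_le hδ hab.ne hf hE
  have hright := abs_intervalAverage_sub_left_le hδ hab.ne' (uIcc_comm a b ▸ hf)
    (uIoc_comm a b ▸ hE)
  rw [interval_average_symm, uIoc_comm b a, abs_sub_comm a b, abs_sub_comm _ (f b)] at hright
  rw [abs_of_pos (sub_pos.2 hab)] at hleft hright
  set X := √(2 * ((b - a) ^ δ * slobEnergy (2 + δ) f (Ι a b) (Ι a b))) /
    (1 - (1 / 2) ^ (δ / 2)) with hX
  have htri : |f b - f a| ≤ 2 * X := by
    linarith [abs_sub_le (f b) (⨍ x in a..b, f x) (f a)]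
  calc (f b - f a) ^ 2 ≤ (2 * X) ^ 2 := sq_le_sq' (abs_le.1 htri).1 (abs_le.1 htri).2
    _ = morreyConst δ * ((b - a) ^ δ * slobEnergy (2 + δ) f (Ι a b) (Ι a b)) := by
        rw [hX, mul_pow, div_pow, Real.sq_sqrt (by positivity), morreyConst]
        ring

end Morrey

section Bisection

variable {θ θ' δ : ℝ} {f : ℝ → ℝ} {a b m : ℝ}

lemma bisection_induction {P : ℝ → ℝ → Prop} {η : ℝ} (hη : 0 < η)
    (short : ∀ a b, a < b → b - a ≤ η → P a b)
    (bisect : ∀ a b, a < b → P a ((a + b) / 2) → P ((a + b) / 2) b → P a b) (hab : a < b) :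
    P a b := by
  have key (n : ℕ) : ∀ a b, a < b → b - a ≤ 2 ^ n * η → P a b := by
    induction n with
    | zero => simpa using short
    | succ n ih =>
      intro a b hab hlen
      rw [pow_succ] at hlen
      exact bisect a b hab (ih _ _ (left_lt_add_div_two.2 hab) (by linarith))
        (ih _ _ (add_div_two_lt_right.2 hab) (by linarith))
  obtain ⟨n, hn⟩ := pow_unbounded_of_one_lt ((b - a) / η) one_lt_two
  exact key n a b hab ((div_lt_iff₀ hη).1 hn).le

lemma slobEnergy_Ioc (ham : a ≤ m) (hmb : m ≤ b)
    (hE : IntegrableOn (slobKernel θ f) (Ioc a b ×ˢ Ioc a b)) :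
    slobEnergy θ f (Ioc a b) (Ioc a b) = slobEnergy θ f (Ioc a m) (Ioc a m) +
      2 * slobEnergy θ f (Ioc a m) (Ioc m b) + slobEnergy θ f (Ioc m b) (Ioc m b) := by
  rw [← Ioc_union_Ioc_eq_Ioc ham hmb] at hE ⊢
  exact slobEnergy_union measurableSet_Ioc measurableSet_Ioc (Ioc_disjoint_Ioc_of_le le_rfl) hE

lemma rpow_neg_mul_slobEnergy_le {S T : Set ℝ} (hδ : 0 ≤ δ) (hθ : θ' + δ = θ) (hab : a < b)
    (hS : MeasurableSet S) (hT : MeasurableSet T) (hSI : S ⊆ Ioc a b) (hTI : T ⊆ Ioc a b)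
    (hE : IntegrableOn (slobKernel θ f) (Ioc a b ×ˢ Ioc a b)) :
    (b - a) ^ (-δ) * slobEnergy θ' f S T ≤ slobEnergy θ f S T := by
  have hdiam := slobEnergy_le_diam_rpow_mul (θ' := θ') (by linarith) (Metric.isBounded_Ioc a b)
    hS hT hSI hTI hE
  rwa [Real.diam_Ioc hab.le, ← hθ, add_sub_cancel_left,
    ← inv_mul_le_iff₀ (Real.rpow_pos_of_pos (sub_pos.2 hab) δ),
    ← Real.rpow_neg (sub_pos.2 hab).le, hθ] at hdiam

/-- The reciprocal of `2 ^ δ - 1`, that is, the sum `∑ 2 ^ (-k * δ)` over `k ≥ 1`. -/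
noncomputable def scaleConst (δ : ℝ) : ℝ := 1 / (2 ^ δ - 1)

lemma two_rpow_sub_one_pos (hδ : 0 < δ) : 0 < (2 : ℝ) ^ δ - 1 :=
  sub_pos.2 (Real.one_lt_rpow one_lt_two hδ)

lemma scaleConst_pos (hδ : 0 < δ) : 0 < scaleConst δ :=
  one_div_pos.2 (two_rpow_sub_one_pos hδ)

lemma scaleConst_mul_two_rpow (hδ : 0 < δ) : scaleConst δ * 2 ^ δ = 1 + scaleConst δ := by
  have := (two_rpow_sub_one_pos hδ).ne'
  unfold scaleConst
  field_simp
  ring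

/-- A potential for the scaled energies `(b - a) ^ (-δ) * slobEnergy (2 + δ) f (Ioc a b) (Ioc a b)`:
by `multiscaleEnergy_bisect` it drops by at least this amount when `(a, b)` is bisected, so it
bounds their sum over all dyadic subintervals. -/
noncomputable def multiscaleEnergy (δ : ℝ) (f : ℝ → ℝ) (a b : ℝ) : ℝ :=
  (1 + scaleConst δ) * slobEnergy (2 + 2 * δ) f (Ioc a b) (Ioc a b) -
    scaleConst δ * ((b - a) ^ (-δ) * slobEnergy (2 + δ) f (Ioc a b) (Ioc a b))

lemma multiscaleEnergy_nonneg (hδ : 0 < δ) (hab : a < b)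
    (hE : IntegrableOn (slobKernel (2 + 2 * δ) f) (Ioc a b ×ˢ Ioc a b)) :
    0 ≤ multiscaleEnergy δ f a b := by
  have hscaled := rpow_neg_mul_slobEnergy_le hδ.le (show 2 + δ + δ = 2 + 2 * δ by ring) hab
    measurableSet_Ioc measurableSet_Ioc subset_rfl subset_rfl hE
  have hnonneg := slobEnergy_nonneg (2 + 2 * δ) f (Ioc a b) (Ioc a b)
  unfold multiscaleEnergy
  linarith [mul_le_mul_of_nonneg_left hscaled (scaleConst_pos hδ).le]

lemma multiscaleEnergy_le (hδ : 0 < δ) (hab : a < b) :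
    multiscaleEnergy δ f a b ≤
      (1 + scaleConst δ) * slobEnergy (2 + 2 * δ) f (Ioc a b) (Ioc a b) := by
  have := scaleConst_pos hδ
  have := sub_pos.2 hab
  have := slobEnergy_nonneg (2 + δ) f (Ioc a b) (Ioc a b)
  exact sub_le_self _ (by positivity)

lemma multiscaleEnergy_bisect (hδ : 0 < δ) (hab : a < b)
    (hf : AEStronglyMeasurable f (volume.restrict (Ioc a b)))
    (hE : IntegrableOn (slobKernel (2 + 2 * δ) f) (Ioc a b ×ˢ Ioc a b)) :
    multiscaleEnergy δ f a ((a + b) / 2) + multiscaleEnergy δ f ((a + b) / 2) b +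
      (b - a) ^ (-δ) * slobEnergy (2 + δ) f (Ioc a b) (Ioc a b) ≤ multiscaleEnergy δ f a b := by
  set m := (a + b) / 2 with hm
  have ham : a < m := left_lt_add_div_two.2 hab
  have hmb : m < b := add_div_two_lt_right.2 hab
  have hE' : IntegrableOn (slobKernel (2 + δ) f) (Ioc a b ×ˢ Ioc a b) :=
    integrableOn_slobKernel_of_le (by linarith) (Metric.isBounded_Ioc a b) measurableSet_Ioc hf hE
  have hcross : (b - a) ^ (-δ) * slobEnergy (2 + δ) f (Ioc a m) (Ioc m b) ≤
      slobEnergy (2 + 2 * δ) f (Ioc a m) (Ioc m b) :=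
    rpow_neg_mul_slobEnergy_le hδ.le (by ring) hab measurableSet_Ioc measurableSet_Ioc
      (Ioc_subset_Ioc_right hmb.le) (Ioc_subset_Ioc_left ham.le) hE
  have hhalf : scaleConst δ * ((b - a) / 2) ^ (-δ) = (1 + scaleConst δ) * (b - a) ^ (-δ) := by
    rw [Real.div_rpow (sub_pos.2 hab).le zero_le_two, Real.rpow_neg zero_le_two, div_inv_eq_mul,
      ← scaleConst_mul_two_rpow hδ]
    ring
  have hK : 0 < 1 + scaleConst δ := add_pos one_pos (scaleConst_pos hδ)
  unfold multiscaleEnergy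
  rw [show m - a = (b - a) / 2 by rw [hm]; ring, show b - m = (b - a) / 2 by rw [hm]; ring,
    ← mul_assoc, ← mul_assoc, hhalf, slobEnergy_Ioc ham.le hmb.le hE,
    slobEnergy_Ioc ham.le hmb.le hE']
  linarith [mul_le_mul_of_nonneg_left hcross hK.le]

end Bisection

section Pairing

variable {δ : ℝ} {v w : ℝ → ℝ} {a b m : ℝ}

/-- The pairing `v w |ₐᵇ - ∫ v w'` of the distributional derivative of `v` on `(a, b)` with `w`. -/
noncomputable def derivPairing (v w : ℝ → ℝ) (a b : ℝ) : ℝ :=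
  v b * w b - v a * w a - ∫ t in a..b, v t * deriv w t

/-- The pairing of the derivative of `v` with the fluctuation of `w` about its mean on `(a, b)`. -/
noncomputable def derivRemainder (v w : ℝ → ℝ) (a b : ℝ) : ℝ :=
  derivPairing v w a b - (⨍ t in a..b, w t) * (v b - v a)

lemma intervalIntegrable_mul_deriv (hv : ContinuousOn v (Icc a b)) (hw : ContDiff ℝ 1 w)
    (hab : a ≤ b) : IntervalIntegrable (fun t => v t * deriv w t) volume a b :=
  (hv.mul (hw.continuous_deriv le_rfl).continuousOn).intervalIntegrable_of_Icc hab

lemma derivPairing_add (hv : ContinuousOn v (Icc a b)) (hw : ContDiff ℝ 1 w) (ham : a ≤ m)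
    (hmb : m ≤ b) : derivPairing v w a m + derivPairing v w m b = derivPairing v w a b := by
  unfold derivPairing
  rw [← intervalIntegral.integral_add_adjacent_intervals
    (intervalIntegrable_mul_deriv (hv.mono (Icc_subset_Icc_right hmb)) hw ham)
    (intervalIntegrable_mul_deriv (hv.mono (Icc_subset_Icc_left ham)) hw hmb)]
  ring

lemma intervalAverage_eq_average_halves (hw : Continuous w) (hab : a ≠ b) :
    ⨍ t in a..b, w t =
      ((⨍ t in a..((a + b) / 2), w t) + ⨍ t in ((a + b) / 2)..b, w t) / 2 := by
  have hlen : b - a ≠ 0 := sub_ne_zero.2 hab.symm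
  rw [interval_average_eq_div, interval_average_eq_div, interval_average_eq_div,
    ← intervalIntegral.integral_add_adjacent_intervals (hw.intervalIntegrable a ((a + b) / 2))
      (hw.intervalIntegrable ((a + b) / 2) b),
    show (a + b) / 2 - a = (b - a) / 2 by ring, show b - (a + b) / 2 = (b - a) / 2 by ring]
  field_simp

lemma derivRemainder_bisect (hv : ContinuousOn v (Icc a b)) (hw : ContDiff ℝ 1 w) (hab : a < b)
    (hm : m = (a + b) / 2) :
    derivRemainder v w a b = derivRemainder v w a m + derivRemainder v w m b +
      ((⨍ t in a..m, w t) - ⨍ t in m..b, w t) / 2 * ((v m - v a) - (v b - v m)) := by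
  subst hm
  unfold derivRemainder
  rw [intervalAverage_eq_average_halves hw.continuous hab.ne, ← derivPairing_add hv hw
    (left_lt_add_div_two.2 hab).le (add_div_two_lt_right.2 hab).le]
  ring

lemma derivRemainder_eq_sub_integral (hv : ContinuousOn v (Icc a b)) (hw : ContDiff ℝ 1 w)
    (hab : a ≤ b) :
    derivRemainder v w a b = (v b - v a) * (w b - ⨍ t in a..b, w t) -
      ∫ t in a..b, (v t - v a) * deriv w t := by
  have hw' : IntervalIntegrable (deriv w) volume a b :=
    (hw.continuous_deriv le_rfl).intervalIntegrable a b
  have hint : ∫ t in a..b, (v t - v a) * deriv w t =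
      (∫ t in a..b, v t * deriv w t) - v a * (w b - w a) := by
    simp only [sub_mul (v _)]
    rw [intervalIntegral.integral_sub (intervalIntegrable_mul_deriv hv hw hab)
      (hw'.const_mul (v a)), intervalIntegral.integral_const_mul,
      intervalIntegral.integral_deriv_eq_sub (fun t _ => hw.differentiable one_ne_zero t) hw']
  unfold derivRemainder derivPairing
  rw [hint]
  ring

lemma abs_derivRemainder_le_of_oscillation {ω M : ℝ} (hv : ContinuousOn v (Icc a b))
    (hw : ContDiff ℝ 1 w) (hab : a < b) (hosc : ∀ t ∈ Icc a b, |v t - v a| ≤ ω)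
    (hM : ∀ t ∈ Icc a b, |deriv w t| ≤ M) :
    |derivRemainder v w a b| ≤ 2 * ω * M * (b - a) := by
  have hω : 0 ≤ ω := (abs_nonneg _).trans (hosc a (left_mem_Icc.2 hab.le))
  obtain ⟨c, hc, hwc⟩ := exists_eq_interval_average hab.ne hw.continuous.continuousOn
  rw [uIoo_of_lt hab] at hc
  have hmean : |w b - ⨍ t in a..b, w t| ≤ M * (b - a) := by
    rw [← hwc]
    calc |w b - w c| ≤ M * |b - c| :=
          (convex_Icc a b).norm_image_sub_le_of_norm_deriv_le
            (fun t _ => hw.differentiable one_ne_zero t) hM (Ioo_subset_Icc_self hc)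
            (right_mem_Icc.2 hab.le)
      _ ≤ M * (b - a) := by
          rw [abs_of_pos (sub_pos.2 hc.2)]
          gcongr
          · exact (abs_nonneg _).trans (hM a (left_mem_Icc.2 hab.le))
          · exact hc.1.le
  have hint : |∫ t in a..b, (v t - v a) * deriv w t| ≤ ω * M * (b - a) := by
    rw [← abs_of_pos (sub_pos.2 hab)]
    refine intervalIntegral.norm_integral_le_of_norm_le_const (E := ℝ) fun t ht => ?_
    have htI : t ∈ Icc a b := Ioc_subset_Icc_self (uIoc_of_le hab.le ▸ ht)
    rw [norm_mul]
    exact mul_le_mul (hosc t htI) (hM t htI) (norm_nonneg _) hω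
  calc |derivRemainder v w a b|
      ≤ |v b - v a| * |w b - ⨍ t in a..b, w t| + |∫ t in a..b, (v t - v a) * deriv w t| := by
        rw [derivRemainder_eq_sub_integral hv hw hab.le, ← abs_mul]
        exact abs_sub _ _
    _ ≤ ω * (M * (b - a)) + ω * M * (b - a) := by
        gcongr
        exact hosc b (right_mem_Icc.2 hab.le)
    _ = 2 * ω * M * (b - a) := by ring

lemma exists_pos_abs_derivRemainder_le (hv : ContinuousOn v (Icc a b)) (hw : ContDiff ℝ 1 w)
    {ε : ℝ} (hε : 0 < ε) :
    ∃ η > 0, ∀ c d, a ≤ c → c < d → d ≤ b → d - c ≤ η →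
      |derivRemainder v w c d| ≤ ε * (d - c) := by
  obtain ⟨M, hM⟩ := isCompact_Icc.exists_bound_of_continuousOn (s := Icc a b)
    (hw.continuous_deriv le_rfl).continuousOn
  have : 0 < |M| + 1 := by positivity
  obtain ⟨η, hη, huc⟩ := Metric.uniformContinuousOn_iff_le.1
    (isCompact_Icc.uniformContinuousOn_of_continuous hv) (ε / (2 * (|M| + 1))) (by positivity)
  refine ⟨η, hη, fun c d hac hcd hdb hlen => ?_⟩
  have hsub : Icc c d ⊆ Icc a b := Icc_subset_Icc hac hdb
  have hosc (t : ℝ) (ht : t ∈ Icc c d) : |v t - v c| ≤ ε / (2 * (|M| + 1)) := by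
    refine huc t (hsub ht) c (hsub (left_mem_Icc.2 hcd.le)) ?_
    rw [Real.dist_eq, abs_of_nonneg (sub_nonneg.2 ht.1)]
    linarith [ht.2]
  have hderiv (t : ℝ) (ht : t ∈ Icc c d) : |deriv w t| ≤ |M| + 1 :=
    (hM t (hsub ht)).trans ((le_abs_self M).trans (le_add_of_nonneg_right zero_le_one))
  calc |derivRemainder v w c d| ≤ 2 * (ε / (2 * (|M| + 1))) * (|M| + 1) * (d - c) :=
        abs_derivRemainder_le_of_oscillation (hv.mono hsub) hw hcd hosc hderiv
    _ = ε * (d - c) := by field_simp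

lemma sq_sub_sub_sub_le (hδ : 0 < δ) (ham : a < m) (hmb : m < b) (hv : ContinuousOn v (Icc a b))
    (hE : IntegrableOn (slobKernel (2 + δ) v) (Ioc a b ×ˢ Ioc a b)) :
    ((v m - v a) - (v b - v m)) ^ 2 ≤
      4 * (morreyConst δ * ((b - a) ^ δ * slobEnergy (2 + δ) v (Ioc a b) (Ioc a b))) := by
  have hC := morreyConst_pos hδ
  have hincr {c d : ℝ} (hac : a ≤ c) (hcd : c < d) (hdb : d ≤ b) :
      (v d - v c) ^ 2 ≤
        morreyConst δ * ((b - a) ^ δ * slobEnergy (2 + δ) v (Ioc a b) (Ioc a b)) := by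
    have hsub : Ioc c d ⊆ Ioc a b := Ioc_subset_Ioc hac hdb
    refine (sq_sub_le_morreyConst_mul hδ hcd (hv.mono (Icc_subset_Icc hac hdb))
      (hE.mono_set (prod_mono hsub hsub))).trans ?_
    have : 0 ≤ d - c := sub_nonneg.2 hcd.le
    have hba : 0 ≤ b - a := by linarith
    have hnonneg := slobEnergy_nonneg (2 + δ) v (Ioc c d) (Ioc c d)
    gcongr
    exact slobEnergy_mono hE hsub hsub
  linarith [hincr le_rfl ham hmb.le, hincr ham.le hmb le_rfl,
    sq_nonneg ((v m - v a) + (v b - v m))]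

lemma sq_intervalAverage_sub_le (hδ : δ ≤ 1) (hab : a < b) (hm : m = (a + b) / 2)
    (hw : IntegrableOn w (Ioc a b))
    (hE : IntegrableOn (slobKernel (2 - 2 * δ) w) (Ioc a b ×ˢ Ioc a b)) :
    ((⨍ t in a..m, w t) - ⨍ t in m..b, w t) ^ 2 ≤
      4 * ((b - a) ^ (-(2 * δ)) * slobEnergy (2 - 2 * δ) w (Ioc a m) (Ioc m b)) := by
  have ham : a < m := hm ▸ left_lt_add_div_two.2 hab
  have hmb : m < b := hm ▸ add_div_two_lt_right.2 hab
  have hba : 0 < b - a := sub_pos.2 hab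
  have hmean := sq_setAverage_sub_setAverage_mul_le_slobEnergy (by linarith)
    (Metric.isBounded_Ioc a b) measurableSet_Ioc measurableSet_Ioc measurableSet_Ioc
    (Ioc_subset_Ioc_right hmb.le) (Ioc_subset_Ioc_left ham.le) hw hE
  rw [Real.diam_Ioc hab.le, Real.volume_real_Ioc_of_le ham.le, Real.volume_real_Ioc_of_le hmb.le,
    show m - a = (b - a) / 2 by rw [hm]; ring, show b - m = (b - a) / 2 by rw [hm]; ring,
    sub_eq_add_neg (2 : ℝ), Real.rpow_add hba, Real.rpow_two] at hmean
  rw [uIoc_of_le ham.le, uIoc_of_le hmb.le, sub_eq_add_neg (2 : ℝ)]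
  refine le_of_mul_le_mul_right ?_ (show 0 < (b - a) / 2 * ((b - a) / 2) by positivity)
  linarith

lemma sq_bisection_error_le (hδ : 0 < δ) (hδ1 : δ ≤ 1) (hv : ContinuousOn v (Icc a b))
    (hw : IntegrableOn w (Ioc a b)) (hab : a < b) (hm : m = (a + b) / 2)
    (hEv : IntegrableOn (slobKernel (2 + δ) v) (Ioc a b ×ˢ Ioc a b))
    (hEw : IntegrableOn (slobKernel (2 - 2 * δ) w) (Ioc a b ×ˢ Ioc a b)) :
    (((⨍ t in a..m, w t) - ⨍ t in m..b, w t) / 2 * ((v m - v a) - (v b - v m))) ^ 2 ≤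
      4 * (((b - a) ^ (-δ) * slobEnergy (2 + δ) v (Ioc a b) (Ioc a b)) *
        (morreyConst δ * slobEnergy (2 - 2 * δ) w (Ioc a m) (Ioc m b))) := by
  have ham : a < m := hm ▸ left_lt_add_div_two.2 hab
  have hmb : m < b := hm ▸ add_div_two_lt_right.2 hab
  have hba : 0 < b - a := sub_pos.2 hab
  have hnonneg := slobEnergy_nonneg (2 - 2 * δ) w (Ioc a m) (Ioc m b)
  have hscale : (b - a) ^ (-(2 * δ)) * (b - a) ^ δ = (b - a) ^ (-δ) := by
    rw [← Real.rpow_add hba]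
    ring_nf
  calc (((⨍ t in a..m, w t) - ⨍ t in m..b, w t) / 2 * ((v m - v a) - (v b - v m))) ^ 2
      = ((⨍ t in a..m, w t) - ⨍ t in m..b, w t) ^ 2 / 4 * ((v m - v a) - (v b - v m)) ^ 2 := by
        ring
    _ ≤ 4 * ((b - a) ^ (-(2 * δ)) * slobEnergy (2 - 2 * δ) w (Ioc a m) (Ioc m b)) / 4 *
          (4 * (morreyConst δ * ((b - a) ^ δ * slobEnergy (2 + δ) v (Ioc a b) (Ioc a b)))) := by
        gcongr
        · exact sq_intervalAverage_sub_le hδ1 hab hm hw hEw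
        · exact sq_sub_sub_sub_le hδ ham hmb hv hEv
    _ = 4 * ((((b - a) ^ (-(2 * δ)) * (b - a) ^ δ) * slobEnergy (2 + δ) v (Ioc a b) (Ioc a b)) *
          (morreyConst δ * slobEnergy (2 - 2 * δ) w (Ioc a m) (Ioc m b))) := by ring
    _ = _ := by rw [hscale]

end Pairing

section Local

variable {δ : ℝ} {v w : ℝ → ℝ} {a b m : ℝ}

/-- The bound on `|derivRemainder v w a b|` that bisection of `(a, b)` preserves. -/
noncomputable def derivRemainderBound (δ : ℝ) (v w : ℝ → ℝ) (a b : ℝ) : ℝ :=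
  2 * (√(multiscaleEnergy δ v a b) *
    √(morreyConst δ * slobEnergy (2 - 2 * δ) w (Ioc a b) (Ioc a b)))

lemma sqrt_mul_sqrt_add_three_le {x₁ x₂ x₃ y₁ y₂ y₃ : ℝ} (hx₁ : 0 ≤ x₁) (hx₂ : 0 ≤ x₂)
    (hx₃ : 0 ≤ x₃) (hy₁ : 0 ≤ y₁) (hy₂ : 0 ≤ y₂) (hy₃ : 0 ≤ y₃) :
    √x₁ * √y₁ + √x₂ * √y₂ + √x₃ * √y₃ ≤ √(x₁ + x₂ + x₃) * √(y₁ + y₂ + y₃) := by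
  simpa [Fin.sum_univ_three] using Real.sum_sqrt_mul_sqrt_le Finset.univ
    (f := ![x₁, x₂, x₃]) (g := ![y₁, y₂, y₃]) (by simp [Fin.forall_fin_succ, hx₁, hx₂, hx₃])
    (by simp [Fin.forall_fin_succ, hy₁, hy₂, hy₃])

lemma abs_bisection_error_le (hδ : 0 < δ) (hδ1 : δ ≤ 1) (hab : a < b) (hm : m = (a + b) / 2)
    (hv : ContinuousOn v (Icc a b)) (hw : IntegrableOn w (Ioc a b))
    (hEv : IntegrableOn (slobKernel (2 + 2 * δ) v) (Ioc a b ×ˢ Ioc a b))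
    (hEw : IntegrableOn (slobKernel (2 - 2 * δ) w) (Ioc a b ×ˢ Ioc a b)) :
    |((⨍ t in a..m, w t) - ⨍ t in m..b, w t) / 2 * ((v m - v a) - (v b - v m))| ≤
      2 * (√((b - a) ^ (-δ) * slobEnergy (2 + δ) v (Ioc a b) (Ioc a b)) *
        √(morreyConst δ * slobEnergy (2 - 2 * δ) w (Ioc a m) (Ioc m b))) := by
  have : 0 < b - a := sub_pos.2 hab
  have hC := morreyConst_pos hδ
  have hv_nonneg := slobEnergy_nonneg (2 + δ) v (Ioc a b) (Ioc a b)
  have hw_nonneg := slobEnergy_nonneg (2 - 2 * δ) w (Ioc a m) (Ioc m b)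
  have hEv' : IntegrableOn (slobKernel (2 + δ) v) (Ioc a b ×ˢ Ioc a b) :=
    integrableOn_slobKernel_of_le (by linarith) (Metric.isBounded_Ioc a b) measurableSet_Ioc
      ((hv.mono Ioc_subset_Icc_self).aestronglyMeasurable measurableSet_Ioc) hEv
  refine abs_le_of_sq_le_sq ?_ (by positivity)
  rw [mul_pow 2, mul_pow √_, Real.sq_sqrt (by positivity), Real.sq_sqrt (by positivity),
    show (2 : ℝ) ^ 2 = 4 by norm_num]
  exact sq_bisection_error_le hδ hδ1 hv hw hab hm hEv' hEw

lemma derivRemainderBound_bisect (hδ : 0 < δ) (hδ1 : δ ≤ 1) (hab : a < b)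
    (hm : m = (a + b) / 2) (hv : ContinuousOn v (Icc a b)) (hw : IntegrableOn w (Ioc a b))
    (hEv : IntegrableOn (slobKernel (2 + 2 * δ) v) (Ioc a b ×ˢ Ioc a b))
    (hEw : IntegrableOn (slobKernel (2 - 2 * δ) w) (Ioc a b ×ˢ Ioc a b)) :
    derivRemainderBound δ v w a m + derivRemainderBound δ v w m b +
        |((⨍ t in a..m, w t) - ⨍ t in m..b, w t) / 2 * ((v m - v a) - (v b - v m))| ≤
      derivRemainderBound δ v w a b := by
  have ham : a < m := hm ▸ left_lt_add_div_two.2 hab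
  have hmb : m < b := hm ▸ add_div_two_lt_right.2 hab
  have hleft : Ioc a m ⊆ Ioc a b := Ioc_subset_Ioc_right hmb.le
  have hright : Ioc m b ⊆ Ioc a b := Ioc_subset_Ioc_left ham.le
  set Ew := fun S T => morreyConst δ * slobEnergy (2 - 2 * δ) w S T with hEw_def
  have hEw_nonneg S T : 0 ≤ Ew S T :=
    mul_nonneg (morreyConst_pos hδ).le (slobEnergy_nonneg _ _ _ _)
  set X := (b - a) ^ (-δ) * slobEnergy (2 + δ) v (Ioc a b) (Ioc a b)
  have hX : 0 ≤ X :=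
    mul_nonneg (Real.rpow_nonneg (sub_pos.2 hab).le _) (slobEnergy_nonneg _ _ _ _)
  have hEv_bisect :
      multiscaleEnergy δ v a m + multiscaleEnergy δ v m b + X ≤ multiscaleEnergy δ v a b := by
    subst hm
    exact multiscaleEnergy_bisect hδ hab
      ((hv.mono Ioc_subset_Icc_self).aestronglyMeasurable measurableSet_Ioc) hEv
  have hEw_bisect : Ew (Ioc a m) (Ioc a m) + Ew (Ioc m b) (Ioc m b) + Ew (Ioc a m) (Ioc m b) ≤
      Ew (Ioc a b) (Ioc a b) := by
    have hcross := hEw_nonneg (Ioc a m) (Ioc m b)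
    simp only [hEw_def] at hcross ⊢
    rw [slobEnergy_Ioc ham.le hmb.le hEw]
    linarith
  have hcauchy := (sqrt_mul_sqrt_add_three_le
    (multiscaleEnergy_nonneg hδ ham (hEv.mono_set (prod_mono hleft hleft)))
    (multiscaleEnergy_nonneg hδ hmb (hEv.mono_set (prod_mono hright hright))) hX
    (hEw_nonneg (Ioc a m) (Ioc a m)) (hEw_nonneg (Ioc m b) (Ioc m b))
    (hEw_nonneg (Ioc a m) (Ioc m b))).trans
    (mul_le_mul (Real.sqrt_le_sqrt hEv_bisect) (Real.sqrt_le_sqrt hEw_bisect)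
      (Real.sqrt_nonneg _) (Real.sqrt_nonneg _))
  unfold derivRemainderBound
  linarith [abs_bisection_error_le hδ hδ1 hab hm hv hw hEv hEw]

lemma abs_derivRemainder_le (hδ : 0 < δ) (hδ1 : δ ≤ 1)
    (hab : a < b) (hv : ContinuousOn v (Icc a b)) (hw : ContDiff ℝ 1 w)
    (hEv : IntegrableOn (slobKernel (2 + 2 * δ) v) (Ioc a b ×ˢ Ioc a b))
    (hEw : IntegrableOn (slobKernel (2 - 2 * δ) w) (Ioc a b ×ˢ Ioc a b)) :
    |derivRemainder v w a b| ≤ derivRemainderBound δ v w a b := by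
  have hba : 0 < b - a := sub_pos.2 hab
  refine le_of_forall_pos_le_add fun ε hε => ?_
  obtain ⟨η, hη, hshort⟩ := exists_pos_abs_derivRemainder_le hv hw (div_pos hε hba)
  suffices key : a ≤ a → b ≤ b → |derivRemainder v w a b| ≤
      derivRemainderBound δ v w a b + ε / (b - a) * (b - a) by
    rw [div_mul_cancel₀ ε hba.ne'] at key
    exact key le_rfl le_rfl
  refine bisection_induction (P := fun c d => a ≤ c → d ≤ b → |derivRemainder v w c d| ≤
    derivRemainderBound δ v w c d + ε / (b - a) * (d - c)) hη
    (fun c d hcd hlen hac hdb => ?_) (fun c d hcd hleft hright hac hdb => ?_) hab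
  · have hnonneg : 0 ≤ derivRemainderBound δ v w c d := by
      unfold derivRemainderBound
      positivity
    linarith [hshort c d hac hcd hdb hlen]
  · obtain ⟨m, hm⟩ : ∃ m, m = (c + d) / 2 := ⟨_, rfl⟩
    rw [← hm] at hleft hright
    have hsub : Ioc c d ⊆ Ioc a b := Ioc_subset_Ioc hac hdb
    have hv' := hv.mono (Icc_subset_Icc hac hdb)
    have hbound := derivRemainderBound_bisect hδ hδ1 hcd hm hv' hw.continuous.integrableOn_Ioc
      (hEv.mono_set (prod_mono hsub hsub)) (hEw.mono_set (prod_mono hsub hsub))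
    rw [derivRemainder_bisect hv' hw hcd hm]
    refine (abs_add_three _ _ _).trans ?_
    linarith [hleft hac (by linarith), hright (by linarith) hdb]

lemma sq_derivRemainder_le (hδ : 0 < δ) (hδ1 : δ ≤ 1)
    (hab : a < b) (hv : ContinuousOn v (Icc a b)) (hw : ContDiff ℝ 1 w)
    (hEv : IntegrableOn (slobKernel (2 + 2 * δ) v) (Ioc a b ×ˢ Ioc a b))
    (hEw : IntegrableOn (slobKernel (2 - 2 * δ) w) (Ioc a b ×ˢ Ioc a b)) :
    derivRemainder v w a b ^ 2 ≤
      4 * ((1 + scaleConst δ) * slobEnergy (2 + 2 * δ) v (Ioc a b) (Ioc a b) *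
        (morreyConst δ * slobEnergy (2 - 2 * δ) w (Ioc a b) (Ioc a b))) := by
  have hC := morreyConst_pos hδ
  have hEw_nonneg := slobEnergy_nonneg (2 - 2 * δ) w (Ioc a b) (Ioc a b)
  calc derivRemainder v w a b ^ 2 ≤ derivRemainderBound δ v w a b ^ 2 :=
        sq_le_sq.2 ((abs_derivRemainder_le hδ hδ1 hab hv hw hEv hEw).trans (le_abs_self _))
    _ = 4 * (multiscaleEnergy δ v a b *
          (morreyConst δ * slobEnergy (2 - 2 * δ) w (Ioc a b) (Ioc a b))) := by
        rw [derivRemainderBound, mul_pow, mul_pow,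
          Real.sq_sqrt (multiscaleEnergy_nonneg hδ hab hEv), Real.sq_sqrt (by positivity)]
        norm_num
    _ ≤ _ := by
        gcongr
        exact multiscaleEnergy_le hδ hab

lemma sq_sub_le_morreyConst_mul_rpow_two_mul (hδ : 0 < δ) (hab : a < b)
    (hv : ContinuousOn v (Icc a b))
    (hEv : IntegrableOn (slobKernel (2 + 2 * δ) v) (Ioc a b ×ˢ Ioc a b)) :
    (v b - v a) ^ 2 ≤
      morreyConst δ * ((b - a) ^ (2 * δ) * slobEnergy (2 + 2 * δ) v (Ioc a b) (Ioc a b)) := by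
  have hC := morreyConst_pos hδ
  have hba : 0 < b - a := sub_pos.2 hab
  have hθ : 2 + δ ≤ 2 + 2 * δ := by linarith
  have hEv' := integrableOn_slobKernel_of_le hθ (Metric.isBounded_Ioc a b) measurableSet_Ioc
    ((hv.mono Ioc_subset_Icc_self).aestronglyMeasurable measurableSet_Ioc) hEv
  have hdiam := slobEnergy_le_diam_rpow_mul hθ (Metric.isBounded_Ioc a b) measurableSet_Ioc
    measurableSet_Ioc subset_rfl subset_rfl hEv
  rw [Real.diam_Ioc hab.le, show 2 + 2 * δ - (2 + δ) = δ by ring] at hdiam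
  rw [two_mul, Real.rpow_add hba, ← two_mul, mul_assoc ((b - a) ^ δ)]
  refine (sq_sub_le_morreyConst_mul hδ hab hv hEv').trans ?_
  gcongr

lemma sq_intervalAverage_mul_sub_le (hδ : 0 < δ) (hab : a < b) (hv : ContinuousOn v (Icc a b))
    (hw : Continuous w)
    (hEv : IntegrableOn (slobKernel (2 + 2 * δ) v) (Ioc a b ×ˢ Ioc a b)) :
    ((⨍ t in a..b, w t) * (v b - v a)) ^ 2 ≤
      morreyConst δ * slobEnergy (2 + 2 * δ) v (Ioc a b) (Ioc a b) *
        ((b - a) ^ (2 * δ - 1) * ∫ t in a..b, w t ^ 2) := by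
  set E := slobEnergy (2 + 2 * δ) v (Ioc a b) (Ioc a b)
  have hE : 0 ≤ E := slobEnergy_nonneg _ _ _ _
  have hba : 0 < b - a := sub_pos.2 hab
  have hC := morreyConst_pos hδ
  have hmean : (⨍ t in a..b, w t) ^ 2 * (b - a) ≤ ∫ t in a..b, w t ^ 2 := by
    rw [uIoc_of_le hab.le, intervalIntegral.integral_of_le hab.le,
      ← Real.volume_real_Ioc_of_le hab.le]
    exact sq_setAverage_mul_measureReal_le measure_Ioc_lt_top.ne hw.integrableOn_Ioc
      (hw.pow 2).integrableOn_Ioc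
  calc ((⨍ t in a..b, w t) * (v b - v a)) ^ 2
      = (⨍ t in a..b, w t) ^ 2 * (v b - v a) ^ 2 := mul_pow _ _ _
    _ ≤ (⨍ t in a..b, w t) ^ 2 * (morreyConst δ * ((b - a) ^ (2 * δ) * E)) := by
        gcongr
        exact sq_sub_le_morreyConst_mul_rpow_two_mul hδ hab hv hEv
    _ = morreyConst δ * E * ((b - a) ^ (2 * δ - 1) * ((⨍ t in a..b, w t) ^ 2 * (b - a))) := by
        rw [Real.rpow_sub_one hba.ne']
        field_simp
    _ ≤ morreyConst δ * E * ((b - a) ^ (2 * δ - 1) * ∫ t in a..b, w t ^ 2) := by gcongr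

lemma sq_derivPairing_le (hδ : 0 < δ) (hδ1 : δ ≤ 1)
    (hab : a < b) (hv : ContinuousOn v (Icc a b)) (hw : ContDiff ℝ 1 w)
    (hEv : IntegrableOn (slobKernel (2 + 2 * δ) v) (Ioc a b ×ˢ Ioc a b))
    (hEw : IntegrableOn (slobKernel (2 - 2 * δ) w) (Ioc a b ×ˢ Ioc a b)) :
    derivPairing v w a b ^ 2 ≤ 8 * (1 + scaleConst δ) * morreyConst δ *
      slobEnergy (2 + 2 * δ) v (Ioc a b) (Ioc a b) *
        (slobEnergy (2 - 2 * δ) w (Ioc a b) (Ioc a b) +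
          (b - a) ^ (2 * δ - 1) * ∫ t in a..b, w t ^ 2) := by
  set E := slobEnergy (2 + 2 * δ) v (Ioc a b) (Ioc a b)
  set F := slobEnergy (2 - 2 * δ) w (Ioc a b) (Ioc a b)
  set W := (b - a) ^ (2 * δ - 1) * ∫ t in a..b, w t ^ 2
  have hWnonneg : 0 ≤ W := mul_nonneg (Real.rpow_nonneg (sub_pos.2 hab).le _)
    (intervalIntegral.integral_nonneg hab.le fun t _ => sq_nonneg _)
  have hprod : 0 ≤ morreyConst δ * E * W :=
    mul_nonneg (mul_nonneg (morreyConst_pos hδ).le (slobEnergy_nonneg _ _ _ _)) hWnonneg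
  calc derivPairing v w a b ^ 2
      = (derivRemainder v w a b + (⨍ t in a..b, w t) * (v b - v a)) ^ 2 := by
        rw [derivRemainder, sub_add_cancel]
    _ ≤ 2 * (derivRemainder v w a b ^ 2 + ((⨍ t in a..b, w t) * (v b - v a)) ^ 2) :=
        add_sq_le
    _ ≤ 2 * (4 * ((1 + scaleConst δ) * E * (morreyConst δ * F)) + morreyConst δ * E * W) := by
        gcongr
        · exact sq_derivRemainder_le hδ hδ1 hab hv hw hEv hEw
        · exact sq_intervalAverage_mul_sub_le hδ hab hv hw.continuous hEv
    _ ≤ 8 * (1 + scaleConst δ) * morreyConst δ * E * (F + W) := by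
        linarith [mul_nonneg (scaleConst_pos hδ).le hprod]

end Local

section Global

variable {s δ σ h : ℝ} {x : ℕ → ℝ} {v : ℕ → ℝ → ℝ} {w : ℝ → ℝ} {N : ℕ}

lemma monotoneOn_Iic_of_le_succ (hx : ∀ i < N, x i ≤ x (i + 1)) : MonotoneOn x (Iic N) :=
  monotoneOn_of_le_succ ordConnected_Iic fun i _ _ hi => hx i (Nat.lt_of_succ_le hi)

lemma Ioc_succ_subset (hx : MonotoneOn x (Iic N)) {i : ℕ} (hi : i < N) :
    Ioc (x i) (x (i + 1)) ⊆ Ioc (x 0) (x N) :=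
  Ioc_subset_Ioc (hx N.zero_le hi.le i.zero_le) (hx (mem_Iic.2 hi) self_mem_Iic hi)

lemma sum_slobEnergy_Ioc_succ_le {θ : ℝ} (hx : MonotoneOn x (Iic N))
    (hE : IntegrableOn (slobKernel θ w) (Ioc (x 0) (x N) ×ˢ Ioc (x 0) (x N))) :
    ∑ i ∈ Finset.range N, slobEnergy θ w (Ioc (x i) (x (i + 1))) (Ioc (x i) (x (i + 1))) ≤
      slobEnergy θ w (Ioc (x 0) (x N)) (Ioc (x 0) (x N)) := by
  refine sum_slobEnergy_le _ (fun _ _ => measurableSet_Ioc) (fun i hi j hj hij => ?_)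
    (fun i hi => Ioc_succ_subset hx (Finset.mem_range.1 hi)) hE
  rw [Finset.mem_coe, Finset.mem_range] at hi hj
  obtain hlt | hlt := hij.lt_or_gt
  · exact Ioc_disjoint_Ioc_of_le (hx (mem_Iic.2 hi) hj.le hlt)
  · exact (Ioc_disjoint_Ioc_of_le (hx (mem_Iic.2 hj) hi.le hlt)).symm

lemma sq_derivPairing_le_of_le_length {v : ℝ → ℝ} {a b : ℝ} (hδ : 0 < δ) (hδ1 : 2 * δ ≤ 1)
    (hh : 0 < h) (hhab : h ≤ b - a) (hab1 : b - a ≤ 1) (hv : ContinuousOn v (Icc a b))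
    (hw : ContDiff ℝ 1 w)
    (hEv : IntegrableOn (slobKernel (2 + 2 * δ) v) (Ioc a b ×ˢ Ioc a b))
    (hEw : IntegrableOn (slobKernel (2 - 2 * δ) w) (Ioc a b ×ˢ Ioc a b)) :
    derivPairing v w a b ^ 2 ≤ 8 * (1 + scaleConst δ) * morreyConst δ * h ^ (2 * δ - 1) *
      slobEnergy (2 + 2 * δ) v (Ioc a b) (Ioc a b) *
        (slobEnergy (2 - 2 * δ) w (Ioc a b) (Ioc a b) + ∫ t in a..b, w t ^ 2) := by
  have hab : a < b := sub_pos.1 (hh.trans_le hhab)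
  set E := slobEnergy (2 + 2 * δ) v (Ioc a b) (Ioc a b)
  set F := slobEnergy (2 - 2 * δ) w (Ioc a b) (Ioc a b)
  have hE : 0 ≤ E := slobEnergy_nonneg _ _ _ _
  have hF : 0 ≤ F := slobEnergy_nonneg _ _ _ _
  have hW : 0 ≤ ∫ t in a..b, w t ^ 2 :=
    intervalIntegral.integral_nonneg hab.le fun t _ => sq_nonneg (w t)
  have hK := scaleConst_pos hδ
  have hC := morreyConst_pos hδ
  have hone : 1 ≤ h ^ (2 * δ - 1) :=
    Real.one_le_rpow_of_pos_of_le_one_of_nonpos hh (hhab.trans hab1) (by linarith)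
  have hlength : (b - a) ^ (2 * δ - 1) ≤ h ^ (2 * δ - 1) :=
    Real.rpow_le_rpow_of_nonpos hh hhab (by linarith)
  calc derivPairing v w a b ^ 2
      ≤ 8 * (1 + scaleConst δ) * morreyConst δ * E *
          (F + (b - a) ^ (2 * δ - 1) * ∫ t in a..b, w t ^ 2) :=
        sq_derivPairing_le hδ (by linarith) hab hv hw hEv hEw
    _ ≤ 8 * (1 + scaleConst δ) * morreyConst δ * E *
          (h ^ (2 * δ - 1) * F + h ^ (2 * δ - 1) * ∫ t in a..b, w t ^ 2) := by
        gcongr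
        exact le_mul_of_one_le_left hF hone
    _ = _ := by ring

lemma sq_sum_derivPairing_le (hδ : 0 < δ) (hδ1 : 2 * δ ≤ 1) (hh : 0 < h)
    (hx : ∀ i < N, h ≤ x (i + 1) - x i) (hx1 : x N - x 0 ≤ 1)
    (hv : ∀ i < N, ContinuousOn (v i) (Icc (x i) (x (i + 1)))) (hw : ContDiff ℝ 1 w)
    (hEv : ∀ i < N, IntegrableOn (slobKernel (2 + 2 * δ) (v i))
      (Ioc (x i) (x (i + 1)) ×ˢ Ioc (x i) (x (i + 1))))
    (hEw : IntegrableOn (slobKernel (2 - 2 * δ) w) (Ioc (x 0) (x N) ×ˢ Ioc (x 0) (x N))) :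
    (∑ i ∈ Finset.range N, derivPairing (v i) w (x i) (x (i + 1))) ^ 2 ≤
      8 * (1 + scaleConst δ) * morreyConst δ * h ^ (2 * δ - 1) *
        (∑ i ∈ Finset.range N,
          slobEnergy (2 + 2 * δ) (v i) (Ioc (x i) (x (i + 1))) (Ioc (x i) (x (i + 1)))) *
        (slobEnergy (2 - 2 * δ) w (Ioc (x 0) (x N)) (Ioc (x 0) (x N)) +
          ∫ t in (x 0)..(x N), w t ^ 2) := by
  have hstep (i : ℕ) (hi : i < N) : x i ≤ x (i + 1) := by linarith [hx i hi]
  have hmono : MonotoneOn x (Iic N) := monotoneOn_Iic_of_le_succ hstep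
  have hK := scaleConst_pos hδ
  have hC := morreyConst_pos hδ
  have hlength (i : ℕ) (hi : i < N) : x (i + 1) - x i ≤ 1 :=
    (sub_le_sub (hmono (mem_Iic.2 hi) self_mem_Iic hi)
      (hmono N.zero_le hi.le i.zero_le)).trans hx1
  have hEw_nonneg (i : ℕ) (hi : i ∈ Finset.range N) :
      0 ≤ slobEnergy (2 - 2 * δ) w (Ioc (x i) (x (i + 1))) (Ioc (x i) (x (i + 1))) +
        ∫ t in (x i)..(x (i + 1)), w t ^ 2 :=
    add_nonneg (slobEnergy_nonneg _ _ _ _) (intervalIntegral.integral_nonneg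
      (hstep i (Finset.mem_range.1 hi)) fun t _ => sq_nonneg (w t))
  have hlocal (i : ℕ) (hi : i ∈ Finset.range N) :=
    have hi := Finset.mem_range.1 hi
    have hsub := Ioc_succ_subset hmono hi
    sq_derivPairing_le_of_le_length hδ hδ1 hh (hx i hi) (hlength i hi) (hv i hi) hw (hEv i hi)
      (hEw.mono_set (prod_mono hsub hsub))
  have hL2 : ∑ i ∈ Finset.range N, ∫ t in (x i)..(x (i + 1)), w t ^ 2 =
      ∫ t in (x 0)..(x N), w t ^ 2 :=
    intervalIntegral.sum_integral_adjacent_intervals fun i _ =>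
      (hw.continuous.pow 2).intervalIntegrable _ _
  refine (Finset.sum_sq_le_sum_mul_sum_of_sq_le_mul _
    (fun i _ => mul_nonneg (by positivity) (slobEnergy_nonneg _ _ _ _)) hEw_nonneg hlocal).trans ?_
  rw [← Finset.mul_sum, Finset.sum_add_distrib, hL2]
  gcongr
  · exact mul_nonneg (by positivity) (Finset.sum_nonneg fun i _ => slobEnergy_nonneg _ _ _ _)
  · exact sum_slobEnergy_Ioc_succ_le hmono hEw

lemma L2sq_add_SlobSq_lt_top_of_HsNorm_pos (hw : 0 < HsNorm σ w) :
    L2sq 0 1 w < ⊤ ∧ SlobSq σ 0 1 w < ⊤ :=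
  ENNReal.add_lt_top.1 (ENNReal.toReal_pos_iff.1 (Real.sqrt_pos.1 hw)).2

lemma toReal_L2sq {a b : ℝ} (hab : a ≤ b) (hw : Continuous w) :
    (L2sq a b w).toReal = ∫ t in a..b, w t ^ 2 := by
  rw [intervalIntegral.integral_of_le hab, integral_Ioc_eq_integral_Ioo,
    integral_eq_lintegral_of_nonneg_ae (.of_forall fun t => sq_nonneg (w t))
      (hw.pow 2).aestronglyMeasurable, L2sq]

lemma sq_HsNorm (hw : Continuous w) (hpos : 0 < HsNorm σ w) :
    HsNorm σ w ^ 2 =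
      slobEnergy (1 + 2 * σ) w (Ioc 0 1) (Ioc 0 1) + ∫ t in (0 : ℝ)..1, w t ^ 2 := by
  obtain ⟨hL2, hSlob⟩ := L2sq_add_SlobSq_lt_top_of_HsNorm_pos hpos
  rw [HsNorm, Real.sq_sqrt ENNReal.toReal_nonneg, ENNReal.toReal_add hL2.ne hSlob.ne,
    toReal_L2sq zero_le_one hw, toReal_SlobSq hw.aestronglyMeasurable, add_comm]

/-- The constant of the dual bound for `D_𝒯` in terms of the shortest element length. -/
noncomputable def dualConst (s : ℝ) : ℝ :=
  √(8 * (1 + scaleConst (s - 1 / 2)) * morreyConst (s - 1 / 2))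

lemma dualConst_pos (hs : 1 / 2 < s) : 0 < dualConst s := by
  have := scaleConst_pos (sub_pos.2 hs)
  have := morreyConst_pos (sub_pos.2 hs)
  unfold dualConst
  positivity

lemma abs_sum_derivPairing_le (hs1 : 1 / 2 < s) (hs2 : s ≤ 1) (hh : 0 < h)
    (hx0 : x 0 = 0) (hxN : x N = 1) (hx : ∀ i < N, h ≤ x (i + 1) - x i)
    (hv : ∀ i < N, ContinuousOn (v i) (Icc (x i) (x (i + 1))))
    (hfin : ∀ i < N, SlobSq s (x i) (x (i + 1)) (v i) < ⊤) (hw : ContDiff ℝ 1 w)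
    (hpos : 0 < HsNorm (1 - s) w) :
    |∑ i ∈ Finset.range N, derivPairing (v i) w (x i) (x (i + 1))| ≤
      dualConst s * h ^ (s - 1) *
        √(∑ i ∈ Finset.range N, (SlobSq s (x i) (x (i + 1)) (v i)).toReal) *
          HsNorm (1 - s) w := by
  have hδ : 0 < s - 1 / 2 := sub_pos.2 hs1
  have hK := scaleConst_pos hδ
  have hC := morreyConst_pos hδ
  have hD := dualConst_pos hs1
  have hθv : 1 + 2 * s = 2 + 2 * (s - 1 / 2) := by ring
  have hθw : 1 + 2 * (1 - s) = 2 - 2 * (s - 1 / 2) := by ring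
  have hvm (i : ℕ) (hi : i < N) :
      AEStronglyMeasurable (v i) (volume.restrict (Ioc (x i) (x (i + 1)))) :=
    ((hv i hi).mono Ioc_subset_Icc_self).aestronglyMeasurable measurableSet_Ioc
  have hEw := integrableOn_slobKernel_of_SlobSq_lt_top hw.continuous.aestronglyMeasurable
    (L2sq_add_SlobSq_lt_top_of_HsNorm_pos hpos).2
  have hsum := sq_sum_derivPairing_le (w := w) hδ (by linarith) hh hx (by rw [hx0, hxN, sub_zero])
    hv hw (fun i hi => hθv ▸ integrableOn_slobKernel_of_SlobSq_lt_top (hvm i hi) (hfin i hi))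
    (by rwa [hx0, hxN, ← hθw])
  have henergy := Finset.sum_congr rfl fun i hi =>
    toReal_SlobSq (s := s) (hvm i (Finset.mem_range.1 hi))
  have hscale : (h ^ (s - 1)) ^ 2 = h ^ (2 * (s - 1 / 2) - 1) := by
    rw [← Real.rpow_mul_natCast hh.le]
    push_cast
    ring_nf
  refine abs_le_of_sq_le_sq (hsum.trans_eq ?_) (by positivity)
  rw [mul_pow, mul_pow, mul_pow, hscale, sq_HsNorm hw.continuous hpos, dualConst,
    Real.sq_sqrt (by positivity), Real.sq_sqrt (Finset.sum_nonneg fun _ _ => ENNReal.toReal_nonneg),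
    henergy, hx0, hxN, hθv, hθw]

end Global

theorem piecewise_derivative_dual_bound_general (s : ℝ) (hs1 : 1 / 2 < s) (hs2 : s < 1) :
    ∃ C : ℝ, 0 < C ∧
      ∀ (N : ℕ) (x : ℕ → ℝ), x 0 = 0 → x N = 1 →
      ∀ h : ℝ, 0 < h → (∀ i < N, h ≤ x (i + 1) - x i) →
      ∀ v : ℕ → ℝ → ℝ,
      (∀ i < N, ContinuousOn (v i) (Icc (x i) (x (i + 1)))) →
      (∀ i < N, SlobSq s (x i) (x (i + 1)) (v i) < ⊤) →
      sSup {r : ℝ | ∃ w : ℝ → ℝ, ContDiff ℝ (⊤ : ℕ∞) w ∧ 0 < HsNorm (1 - s) w ∧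
          r = |∑ i ∈ Finset.range N,
                (v i (x (i + 1)) * w (x (i + 1)) - v i (x i) * w (x i)
                  - ∫ t in Ioo (x i) (x (i + 1)), v i t * deriv w t)| / HsNorm (1 - s) w}
        ≤ C * h ^ (s - 1) *
            √(∑ i ∈ Finset.range N, (SlobSq s (x i) (x (i + 1)) (v i)).toReal) := by
  have hC := dualConst_pos hs1
  refine ⟨dualConst s, hC, fun N x hx0 hxN h hh hx v hv hfin =>
    Real.sSup_le ?_ (by positivity)⟩
  rintro _ ⟨w, hw, hpos, rfl⟩
  have hpairing : ∀ i ∈ Finset.range N, v i (x (i + 1)) * w (x (i + 1)) - v i (x i) * w (x i)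
      - ∫ t in Ioo (x i) (x (i + 1)), v i t * deriv w t =
        derivPairing (v i) w (x i) (x (i + 1)) := fun i hi => by
    have hlt : x i ≤ x (i + 1) := by linarith [hx i (Finset.mem_range.1 hi)]
    rw [derivPairing, intervalIntegral.integral_of_le hlt, integral_Ioc_eq_integral_Ioo]
  rw [Finset.sum_congr rfl hpairing, div_le_iff₀ hpos]
  exact abs_sum_derivPairing_le hs1 hs2.le hh hx0 hxN hx hv hfin
    (hw.of_le (by exact_mod_cast le_top)) hpos

/-- for `s ∈ (1/2,1)` and a quasi-uniform partition `𝒯` of `(0,1)` into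
`N` intervals, the piecewise distributional derivative of a piecewise `H^s` function
`v` satisfies `‖D_𝒯 v‖_{H̃^{s-1}(0,1)} ≤ C N^{1-s} (∑_T |v|²_{H^s(T)})^{1/2}`, where the
`H̃^{s-1}` norm is the dual norm against `H^{1-s}(0,1)`, realized by testing with smooth
functions `w` (the pairing being `∑_T (v w|_{∂T} − ∫_T v Dw)`). -/
theorem piecewise_derivative_dual_bound (s : ℝ) (hs1 : 1 / 2 < s) (hs2 : s < 1)
    (cq : ℝ) (hcq : 1 ≤ cq) :
    ∃ C : ℝ, 0 < C ∧
      ∀ (N : ℕ), 0 < N → ∀ x : ℕ → ℝ, x 0 = 0 → x N = 1 →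
      (∀ i < N, 1 / (cq * N) ≤ x (i + 1) - x i ∧ x (i + 1) - x i ≤ cq / N) →
      ∀ v : ℕ → ℝ → ℝ,
      (∀ i < N, ContinuousOn (v i) (Icc (x i) (x (i + 1)))) →
      (∀ i < N, SlobSq s (x i) (x (i + 1)) (v i) < ⊤) →
      sSup {r : ℝ | ∃ w : ℝ → ℝ, ContDiff ℝ (⊤ : ℕ∞) w ∧ 0 < HsNorm (1 - s) w ∧
          r = |∑ i ∈ Finset.range N,
                (v i (x (i + 1)) * w (x (i + 1)) - v i (x i) * w (x i)
                  - ∫ t in Ioo (x i) (x (i + 1)), v i t * deriv w t)| / HsNorm (1 - s) w}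
        ≤ C * (N : ℝ) ^ (1 - s) *
            Real.sqrt (∑ i ∈ Finset.range N, (SlobSq s (x i) (x (i + 1)) (v i)).toReal) := by
  obtain ⟨C, hC, hbound⟩ := piecewise_derivative_dual_bound_general s hs1 hs2
  refine ⟨C * cq ^ (1 - s), by positivity, fun N hN x hx0 hxN hx v hv hfin => ?_⟩
  have hN' : (0 : ℝ) < N := Nat.cast_pos.2 hN
  have hscale : (1 / (cq * N)) ^ (s - 1) = cq ^ (1 - s) * (N : ℝ) ^ (1 - s) := by
    rw [one_div, Real.inv_rpow (by positivity), ← Real.rpow_neg (by positivity), neg_sub,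
      Real.mul_rpow (by positivity) hN'.le]
  have hdual := hbound N x hx0 hxN (1 / (cq * N)) (by positivity) (fun i hi => (hx i hi).1) v hv
    hfin
  rwa [hscale, ← mul_assoc] at hdual
end
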